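/- arXiv:2310.12136 — 6 statements merged into one kernel-verified Lean document; each statement's English description precedes it below -/
import Mathlib

section
/- Let x ∈ Σ = {0,1}^ℕ, ℓ ≥ 1 and n ≥ 2 be integers, 0 ≤ i,j < n distinct, and ε = 2^{-h} with h ∈ ℕ. Then (i,j,ℓ) is a diagonal line in RP(x,n,ε) if and only if (i,j,ℓ+h−1) is a diagonal line in RP(x,n+h−1,ε₀), where ε₀ = 1/2. -/
open Filter Topology MeasureTheory

namespace RQA

/-- The standard metric on symbolic sequences over an alphabet `α`:
`ρ(x,y) = 2^{-min{i : x i ≠ y i}}` for `x ≠ y` and `ρ(x,x) = 0`. -/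
noncomputable def seqDist {α : Type*} (x y : ℕ → α) : ℝ :=
  haveI := Classical.propDecidable (x = y)
  if x = y then 0 else (2 : ℝ) ^ (-((sInf {i : ℕ | x i ≠ y i} : ℕ) : ℤ))

/-- The (one-sided) shift on sequences. -/
def shift {α : Type*} (x : ℕ → α) : ℕ → α := fun i => x (i + 1)

/-- The embedded sequence `x^{(m)}`, a sequence over the alphabet `α^m`. -/
def embedSeq {α : Type*} (m : ℕ) (x : ℕ → α) : ℕ → (Fin m → α) :=
  fun j t => x (j + (t : ℕ))

section RQAdefs

variable {X : Type*} (d : X → X → ℝ) (f : X → X) (x : X)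

/-- The entry of the recurrence plot at `(i,j)` equals `1`. -/
def RPone (ε : ℝ) (i j : ℕ) : Prop := d (f^[i] x) (f^[j] x) ≤ ε

/-- `(i, j, l)` is a diagonal line in the recurrence plot `RP(x, n, ε)`. -/
def IsLine (n : ℕ) (ε : ℝ) (i j l : ℕ) : Prop :=
  1 ≤ l ∧ i + l ≤ n ∧ j + l ≤ n ∧ i ≠ j ∧
  (∀ h, h < l → RPone d f x ε (i + h) (j + h)) ∧
  (0 < i → 0 < j → ¬ RPone d f x ε (i - 1) (j - 1)) ∧
  (max i j + l < n → ¬ RPone d f x ε (i + l) (j + l))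

/-- `N_l(x, n, ε)`: the number of diagonal lines of length exactly `l`. -/
noncomputable def Nlines (n : ℕ) (ε : ℝ) (l : ℕ) : ℕ :=
  Set.ncard {p : ℕ × ℕ | IsLine d f x n ε p.1 p.2 l}

/-- `P_l(x, n, ε) = N_l/(n² − n)`. -/
noncomputable def Pline (n : ℕ) (ε : ℝ) (l : ℕ) : ℝ :=
  (Nlines d f x n ε l : ℝ) / ((n : ℝ) ^ 2 - (n : ℝ))

/-- `P≥_ℓ(x, n, ε) = Σ_{l ≥ ℓ} P_l`. -/
noncomputable def PlineGe (n : ℕ) (ε : ℝ) (ℓ : ℕ) : ℝ :=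
  ∑' k : ℕ, Pline d f x n ε (ℓ + k)

/-- The recurrence rate `RR_ℓ(x, n, ε) = Σ_{l ≥ ℓ} l · P_l`. -/
noncomputable def RRate (n : ℕ) (ε : ℝ) (ℓ : ℕ) : ℝ :=
  ∑' k : ℕ, ((ℓ + k : ℕ) : ℝ) * Pline d f x n ε (ℓ + k)

/-- The determinism `DET_ℓ(x, n, ε) = RR_ℓ/RR_1`. -/
noncomputable def DETrm (n : ℕ) (ε : ℝ) (ℓ : ℕ) : ℝ :=
  RRate d f x n ε ℓ / RRate d f x n ε 1

/-- The average line length `L_ℓ(x, n, ε) = RR_ℓ/P≥_ℓ`. -/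
noncomputable def LAvg (n : ℕ) (ε : ℝ) (ℓ : ℕ) : ℝ :=
  RRate d f x n ε ℓ / PlineGe d f x n ε ℓ

/-- The entropy of line lengths
`ENT_ℓ(x, n, ε) = log P≥_ℓ − (1/P≥_ℓ)·Σ_{l≥ℓ} P_l · log P_l` (with `0·log 0 = 0`). -/
noncomputable def ENTln (n : ℕ) (ε : ℝ) (ℓ : ℕ) : ℝ :=
  Real.log (PlineGe d f x n ε ℓ) -
    (PlineGe d f x n ε ℓ)⁻¹ *
      ∑' k : ℕ, Pline d f x n ε (ℓ + k) * Real.log (Pline d f x n ε (ℓ + k))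

/-- The correlation sum
`C_ℓ(x, n, ε) = n^{-2}·#{(i,j) ∈ [0,n)² : d_ℓ(f^i x, f^j x) ≤ ε}`,
where `d_ℓ` is the Bowen metric. -/
noncomputable def corrSum (ℓ n : ℕ) (ε : ℝ) : ℝ :=
  (Set.ncard {p : ℕ × ℕ | p.1 < n ∧ p.2 < n ∧
      ∀ k, k < ℓ → d (f^[p.1 + k] x) (f^[p.2 + k] x) ≤ ε} : ℝ) / (n : ℝ) ^ 2

end RQAdefs

/-- The extension of a substitution to a morphism of the free monoid of finite words. -/
def substWord (ζ : Bool → List Bool) : List Bool → List Bool :=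
  fun w => w.foldr (fun a r => ζ a ++ r) []

/-- `ζ` is a (binary) substitution of constant length `q ≥ 2`. -/
def IsConstLenSubst (ζ : Bool → List Bool) (q : ℕ) : Prop :=
  2 ≤ q ∧ ∀ a : Bool, (ζ a).length = q

/-- The language `L_ζ`: subwords of the words `ζ^k(a)`, `a ∈ A`, `k ≥ 1`. -/
def substLang (ζ : Bool → List Bool) : Set (List Bool) :=
  {w | ∃ a : Bool, ∃ k : ℕ, 1 ≤ k ∧ w <:+: (substWord ζ)^[k] [a]}

/-- The substitution subshift `X_ζ`. -/
def SubstShift (ζ : Bool → List Bool) : Set (ℕ → Bool) :=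
  {y | ∀ n : ℕ, (List.ofFn fun t : Fin n => y (t : ℕ)) ∈ substLang ζ}

/-- `ζ` is primitive. -/
def IsPrimitive (ζ : Bool → List Bool) : Prop :=
  ∃ k : ℕ, 1 ≤ k ∧ ∀ a b : Bool, b ∈ (substWord ζ)^[k] [a]

/-- `ζ` is aperiodic: `X_ζ` contains a non-periodic sequence. -/
def IsAperiodic (ζ : Bool → List Bool) : Prop :=
  ∃ y ∈ SubstShift ζ, ∀ p : ℕ, 1 ≤ p → ∃ i : ℕ, y (i + p) ≠ y i

/-- The action of a constant length-`q` substitution on infinite sequences. -/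
def substSeq (ζ : Bool → List Bool) (q : ℕ) (x : ℕ → Bool) : ℕ → Bool :=
  fun i => (ζ (x (i / q))).getD (i % q) false

/-- `(i, j, l)` is a line in the infinite symbolic recurrence plot `RP(x, ∞, ε₀)`. -/
def IsInfLine (x : ℕ → Bool) (i j l : ℕ) : Prop :=
  1 ≤ l ∧ i ≠ j ∧ (∀ h, h < l → x (i + h) = x (j + h)) ∧
  (0 < i → 0 < j → x (i - 1) ≠ x (j - 1)) ∧ x (i + l) ≠ x (j + l)

/-- `K_l`: the set of starting points `(i,j)`, `i,j ≥ 1`, of inner lines of length `l`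
in the infinite symbolic recurrence plot. -/
def Kset (x : ℕ → Bool) (l : ℕ) : Set (ℕ × ℕ) :=
  {p | 1 ≤ p.1 ∧ 1 ≤ p.2 ∧ IsInfLine x p.1 p.2 l}

/-- `#(M ∩ [0,n)²)/n²`. -/
noncomputable def densCount (M : Set (ℕ × ℕ)) (n : ℕ) : ℝ :=
  (Set.ncard (M ∩ {p : ℕ × ℕ | p.1 < n ∧ p.2 < n}) : ℝ) / (n : ℝ) ^ 2

/-- `M ⊆ ℕ²` has asymptotic density `a`. -/
def HasDens (M : Set (ℕ × ℕ)) (a : ℝ) : Prop :=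
  Tendsto (densCount M) atTop (𝓝 a)

/-- `δ_l(n) = #(K_l ∩ [1,n)²)/(n² − n)`. -/
noncomputable def deltaK (x : ℕ → Bool) (l n : ℕ) : ℝ :=
  (Set.ncard (Kset x l ∩ {p : ℕ × ℕ | p.1 < n ∧ p.2 < n}) : ℝ) / ((n : ℝ) ^ 2 - (n : ℝ))

/-- `M` is a minimal subset of the subshift `Y`. -/
def IsMinimalSubset (Y M : Set (ℕ → Bool)) : Prop :=
  M ⊆ Y ∧ M.Nonempty ∧ IsClosed M ∧ (∀ z ∈ M, shift z ∈ M) ∧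
  ∀ M' : Set (ℕ → Bool), M' ⊆ M → M'.Nonempty → IsClosed M' →
    (∀ z ∈ M', shift z ∈ M') → M' = M

end RQA

open RQA

theorem seqDist_le_aux (x y : ℕ → Bool) (h : ℕ) :
    seqDist x y ≤ (2:ℝ) ^ (-(h:ℤ)) ↔ ∀ k, k < h → x k = y k := by
  unfold seqDist
  split_ifs with hxy
  · subst hxy
    simp only [implies_true, iff_true]
    positivity
  · have hne : {i : ℕ | x i ≠ y i}.Nonempty := by
      by_contra hc
      apply hxy
      funext k
      by_contra hk
      exact hc ⟨k, hk⟩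
    rw [zpow_le_zpow_iff_right₀ (by norm_num : (1:ℝ) < 2)]
    constructor
    · intro hle k hk
      by_contra hc
      have h2 : sInf {i : ℕ | x i ≠ y i} ≤ k := Nat.sInf_le hc
      omega
    · intro hall
      have h1 := Nat.sInf_mem hne
      by_contra hc
      exact h1 (hall _ (by omega))

theorem shift_iter_aux (x : ℕ → Bool) (i k : ℕ) : (shift^[i] x) k = x (i + k) := by
  induction i generalizing x with
  | zero => simp
  | succ n ih =>
    rw [Function.iterate_succ_apply, ih]
    unfold shift
    congr 1
    omega

theorem RPone_aux (x : ℕ → Bool) (h i j : ℕ) :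
    RPone seqDist shift x ((2:ℝ) ^ (-(h:ℤ))) i j ↔ ∀ k, k < h → x (i + k) = x (j + k) := by
  unfold RPone
  rw [seqDist_le_aux]
  simp only [shift_iter_aux]

theorem RPone_half_aux (x : ℕ → Bool) (i j : ℕ) :
    RPone seqDist shift x (1/2 : ℝ) i j ↔ x i = x j := by
  have h := RPone_aux x 1 i j
  have e : ((2:ℝ) ^ (-((1:ℕ):ℤ))) = 1/2 := by norm_num
  rw [e] at h
  rw [h]
  constructor
  · intro h; exact h 0 (by omega)
  · intro h k hk
    obtain rfl : k = 0 := by omega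
    exact h

/-- (i,j,ℓ) is a line in RP(x,n,2^{-h}) iff (i,j,ℓ+h−1) is a line in
RP(x,n+h−1,ε₀), ε₀ = 1/2. -/
theorem isLine_iff_isLine_eps0
    (x : ℕ → Bool) (ℓ n i j h : ℕ) (hℓ : 1 ≤ ℓ) (hn : 2 ≤ n)
    (hi : i < n) (hj : j < n) (hij : i ≠ j) (hh : 1 ≤ h) :
    IsLine seqDist shift x n ((2:ℝ) ^ (-(h:ℤ))) i j ℓ ↔
      IsLine seqDist shift x (n + h - 1) (1/2 : ℝ) i j (ℓ + h - 1) := by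
  obtain ⟨m, rfl⟩ : ∃ m, h = m + 1 := ⟨h - 1, by omega⟩
  have e1 : n + (m + 1) - 1 = n + m := by omega
  have e2 : ℓ + (m + 1) - 1 = ℓ + m := by omega
  rw [e1, e2]
  unfold IsLine
  simp only [RPone_aux, RPone_half_aux]
  have body : (∀ t, t < ℓ → ∀ k, k < m + 1 → x (i + t + k) = x (j + t + k)) ↔
      ∀ s, s < ℓ + m → x (i + s) = x (j + s) := by
    constructor
    · intro H s hs
      by_cases hc : s < ℓ
      · exact H s hc 0 (by omega)
      · have := H (ℓ - 1) (by omega) (s - (ℓ - 1)) (by omega)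
        rwa [show i + (ℓ - 1) + (s - (ℓ - 1)) = i + s by omega,
          show j + (ℓ - 1) + (s - (ℓ - 1)) = j + s by omega] at this
    · intro H t ht k hk
      rw [add_assoc, add_assoc]
      exact H _ (by omega)
  rw [body]
  by_cases B : ∀ s, s < ℓ + m → x (i + s) = x (j + s)
  swap
  · exact ⟨fun H => absurd H.2.2.2.2.1 B, fun H => absurd H.2.2.2.2.1 B⟩
  have L : 0 < i → 0 < j → ((∀ k, k < m + 1 → x (i - 1 + k) = x (j - 1 + k)) ↔
      x (i - 1) = x (j - 1)) := by
    intro h1 h2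
    constructor
    · intro H; exact H 0 (by omega)
    · intro H k hk
      rcases k with _ | k
      · exact H
      · rw [show i - 1 + (k + 1) = i + k by omega, show j - 1 + (k + 1) = j + k by omega]
        exact B k (by omega)
  have R : (∀ k, k < m + 1 → x (i + ℓ + k) = x (j + ℓ + k)) ↔
      x (i + (ℓ + m)) = x (j + (ℓ + m)) := by
    simp only [add_assoc]
    constructor
    · intro H; exact H m (by omega)
    · intro H k hk
      by_cases hc : k = m
      · rw [hc]; exact H
      · exact B _ (by omega)
  rw [R]
  have a1 : 1 ≤ ℓ ↔ 1 ≤ ℓ + m := by omega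
  have a2 : i + ℓ ≤ n ↔ i + (ℓ + m) ≤ n + m := by omega
  have a3 : j + ℓ ≤ n ↔ j + (ℓ + m) ≤ n + m := by omega
  have a4 : max i j + ℓ < n ↔ max i j + (ℓ + m) < n + m := by omega
  rw [← a1, ← a2, ← a3, ← a4]
  constructor
  · rintro ⟨c1, c2, c3, c4, c5, c6, c7⟩
    exact ⟨c1, c2, c3, c4, c5, fun p q r => c6 p q ((L p q).2 r), c7⟩
  · rintro ⟨c1, c2, c3, c4, c5, c6, c7⟩
    exact ⟨c1, c2, c3, c4, c5, fun p q r => c6 p q ((L p q).1 r), c7⟩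
end

section
/- Let x ∈ Σ = {0,1}^ℕ, m, n, ℓ ∈ ℕ and ε ∈ (0,1). Then the correlation sum of the embedded sequence satisfies C_ℓ(x^{(m)}, n, ε) = C_ℓ(x, n, 2^{-m+1}·ε). -/
open Filter Topology MeasureTheory

open RQA

theorem seqDist_le_iff {α : Type*} (u v : ℕ → α) (ε : ℝ) (h0 : 0 < ε) :
    seqDist u v ≤ ε ↔ ∀ i, u i ≠ v i → (2:ℝ) ^ (-(i:ℤ)) ≤ ε := by
  unfold seqDist
  split_ifs with h
  · subst h
    simp [h0.le]
  · have hne : {i : ℕ | u i ≠ v i}.Nonempty := by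
      by_contra hc
      rw [Set.not_nonempty_iff_eq_empty] at hc
      apply h
      funext i
      by_contra hi
      have : i ∈ {i : ℕ | u i ≠ v i} := hi
      rw [hc] at this
      exact this
    constructor
    · intro hle i hi
      have h1 : sInf {i : ℕ | u i ≠ v i} ≤ i := Nat.sInf_le hi
      refine le_trans (zpow_le_zpow_right₀ (by norm_num) ?_) hle
      omega
    · intro hall
      exact hall _ (Nat.sInf_mem hne)

theorem shift_iter_embed (m i : ℕ) (x : ℕ → Bool) :
    shift^[i] (embedSeq m x) = embedSeq m (shift^[i] x) := by
  have hs : Function.Semiconj (embedSeq m) (shift (α := Bool)) shift := by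
    intro y
    funext j t
    simp only [embedSeq, shift]
    congr 1
    omega
  exact ((hs.iterate_right i) x).symm

theorem embed_dist_iff (u v : ℕ → Bool) (m : ℕ) (hm : 1 ≤ m)
    (ε : ℝ) (hε0 : 0 < ε) (hε1 : ε < 1) :
    seqDist (embedSeq m u) (embedSeq m v) ≤ ε ↔
      seqDist u v ≤ (2:ℝ) ^ (1 - (m : ℤ)) * ε := by
  rw [seqDist_le_iff _ _ _ hε0, seqDist_le_iff _ _ _ (by positivity)]
  constructor
  · intro h j hj
    by_cases hjm : m - 1 ≤ j
    · have h1 := h (j - (m - 1)) (by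
        intro hc
        apply hj
        have := congrFun hc ⟨m - 1, by omega⟩
        simpa [embedSeq, Nat.sub_add_cancel hjm] using this)
      have h2 : (-(j:ℤ)) = (1 - (m:ℤ)) + (-((j - (m - 1) : ℕ) : ℤ)) := by omega
      rw [h2, zpow_add₀ (by norm_num)]
      exact mul_le_mul_of_nonneg_left h1 (by positivity)
    · have h1 := h 0 (by
        intro hc
        apply hj
        have := congrFun hc ⟨j, by omega⟩
        simpa [embedSeq] using this)
      norm_num at h1
      linarith
  · intro h i hi
    obtain ⟨t, ht⟩ := Function.ne_iff.mp hi
    have h1 := h (i + t) ht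
    have h2 : (2:ℝ) ^ (-(i:ℤ)) ≤ 2 ^ ((m:ℤ) - 1) * 2 ^ (-((i + t : ℕ) : ℤ)) := by
      rw [← zpow_add₀ (by norm_num)]
      apply zpow_le_zpow_right₀ (by norm_num)
      have := t.2
      push_cast
      omega
    refine h2.trans ((mul_le_mul_of_nonneg_left h1 (by positivity)).trans (le_of_eq ?_))
    rw [← mul_assoc, ← zpow_add₀ (by norm_num)]
    simp

/-- Embedded correlation sum: C_ℓ(x^{(m)},n,ε) = C_ℓ(x,n,2^{-m+1}ε). -/
theorem embedded_corrSum
    (x : ℕ → Bool) (m n ℓ : ℕ) (hm : 1 ≤ m) (hn : 1 ≤ n) (hℓ : 1 ≤ ℓ)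
    (ε : ℝ) (hε0 : 0 < ε) (hε1 : ε < 1) :
    corrSum seqDist shift (embedSeq m x) ℓ n ε
      = corrSum seqDist shift x ℓ n ((2:ℝ) ^ (1 - (m : ℤ)) * ε) := by
  simp only [corrSum, shift_iter_embed, embed_dist_iff _ _ m hm ε hε0 hε1]
end

section
/- Let ζ be a binary substitution of constant length q ≥ 2 with ζ(0) ≠ 0^q and ζ(1) = 1^q. For ℓ ∈ ℕ let Δ_ℓ be the maximal number of occurrences of the letter 0 in a word of length ℓ belonging to the language L_ζ. Then lim_{ℓ→∞} Δ_ℓ/ℓ = 0. -/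
open Filter Topology MeasureTheory

open RQA

/-- The maximal number of occurrences of the letter 0 in a word of length ℓ of L_ζ. -/
noncomputable def maxZeros (ζ : Bool → List Bool) (ℓ : ℕ) : ℕ :=
  sSup {k : ℕ | ∃ w ∈ substLang ζ, w.length = ℓ ∧ w.count false = k}

lemma sw_cons (ζ : Bool → List Bool) (a : Bool) (u : List Bool) :
    substWord ζ (a :: u) = ζ a ++ substWord ζ u := rfl

lemma sw_prefix (ζ : Bool → List Bool) (q : ℕ) (hl : ∀ a, (ζ a).length = q) (u : List Bool) :
    ∀ w, w <+: substWord ζ u → ∃ u', u' <+: u ∧ w <+: substWord ζ u' ∧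
      q * u'.length ≤ w.length + q := by
  induction u with
  | nil => intro w hw; exact ⟨[], List.prefix_rfl, hw, by simp⟩
  | cons a u ih =>
    intro w hw
    rw [sw_cons] at hw
    rcases List.prefix_or_prefix_of_prefix hw (List.prefix_append (ζ a) (substWord ζ u)) with h | h
    · refine ⟨[a], by simp, ?_, by simp⟩
      rw [sw_cons]
      exact h.trans (List.prefix_append _ _)
    · obtain ⟨w', rfl⟩ := h
      rw [List.prefix_append_right_inj] at hw
      obtain ⟨u', h1, h2, h3⟩ := ih w' hw
      refine ⟨a :: u', by simpa using h1, ?_, ?_⟩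
      · rw [sw_cons, List.prefix_append_right_inj]; exact h2
      · simp only [List.length_cons, List.length_append, hl, mul_add]; omega

lemma sw_infix (ζ : Bool → List Bool) (q : ℕ) (hl : ∀ a, (ζ a).length = q) (u : List Bool) :
    ∀ w, w <:+: substWord ζ u → ∃ u', u' <:+: u ∧ w <:+: substWord ζ u' ∧
      q * u'.length ≤ w.length + 2 * q := by
  induction u with
  | nil => intro w hw; exact ⟨[], List.infix_rfl, hw, by simp⟩
  | cons a u ih =>
    rintro w ⟨s, t, hst⟩
    rw [sw_cons, List.append_assoc, List.append_eq_append_iff] at hst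
    rcases hst with ⟨b, hb, hc⟩ | ⟨b, hb, hc⟩
    · rcases List.append_eq_append_iff.1 hc with ⟨c, hd, he⟩ | ⟨c, hd, he⟩
      · refine ⟨[a], ⟨[], u, by simp⟩, ?_, by simp; omega⟩
        rw [sw_cons]
        exact ⟨s, c ++ substWord ζ [], by simp [hb, hd]⟩
      · obtain ⟨u', h1, h2, h3⟩ := sw_prefix ζ q hl u c ⟨t, he.symm⟩
        refine ⟨a :: u', ?_, ?_, ?_⟩
        · obtain ⟨r, hr⟩ := h1
          exact ⟨[], r, by simp [hr]⟩
        · obtain ⟨r, hr⟩ := h2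
          exact ⟨s, r, by rw [sw_cons, hb, hd, ← hr]; simp⟩
        · simp only [List.length_cons, hd, List.length_append, mul_add]; omega
    · obtain ⟨u', h1, h2, h3⟩ := ih w ⟨b, t, by rw [hc]; simp⟩
      exact ⟨u', h1.trans ⟨[a], [], by simp⟩, h2, h3⟩

lemma sw_count (ζ : Bool → List Bool) (q : ℕ) (hl : ∀ a, (ζ a).length = q)
    (h0 : ζ false ≠ List.replicate q false) (h1 : ζ true = List.replicate q true)
    (u : List Bool) :
    (substWord ζ u).count false ≤ (q - 1) * u.count false := by
  induction u with
  | nil => simp [substWord]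
  | cons a u ih =>
    rw [sw_cons, List.count_append]
    cases a with
    | true => simpa [h1, List.count_replicate] using ih
    | false =>
      have h2 : (ζ false).count false ≤ q - 1 := by
        have h3 : (ζ false).count false ≤ (ζ false).length := List.count_le_length
        have h4 : (ζ false).count false ≠ (ζ false).length := by
          intro h
          apply h0
          rw [List.count_eq_length] at h
          rw [List.eq_replicate_iff]
          exact ⟨hl _, fun b hb => (h b hb).symm⟩
        rw [hl] at h3 h4
        omega
      rw [List.count_cons_self, mul_add]
      omega

lemma main_bound (ζ : Bool → List Bool) (q : ℕ) (hl : ∀ a, (ζ a).length = q)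
    (h0 : ζ false ≠ List.replicate q false) (h1 : ζ true = List.replicate q true) (m : ℕ) :
    ∃ C : ℕ, ∀ (k : ℕ) (a : Bool) (w : List Bool), w <:+: (substWord ζ)^[k] [a] →
      w.count false * q ^ m ≤ (q - 1) ^ m * w.length + C := by
  induction m with
  | zero => exact ⟨0, fun k a w _ => by simpa using List.count_le_length⟩
  | succ m ih =>
    obtain ⟨C, hC⟩ := ih
    refine ⟨q ^ (m + 1) + (q - 1) ^ (m + 1) * (2 * q) + (q - 1) * q * C, ?_⟩
    intro k a w hw
    cases k with
    | zero =>
      have h2 : w.count false ≤ 1 := by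
        have := hw.length_le
        have h3 : w.count false ≤ w.length := List.count_le_length
        simp at this
        omega
      calc w.count false * q ^ (m + 1) ≤ 1 * q ^ (m + 1) := Nat.mul_le_mul_right _ h2
        _ ≤ _ := by
          rw [one_mul]
          simp only [add_assoc]
          exact (Nat.le_add_right _ _).trans (Nat.le_add_left _ _)
    | succ k =>
      rw [Function.iterate_succ_apply'] at hw
      obtain ⟨u, hu1, hu2, hu3⟩ := sw_infix ζ q hl _ w hw
      have h2 := hC k a u hu1
      have h3 : w.count false ≤ (q - 1) * u.count false :=
        (hu2.sublist.count_le _).trans (sw_count ζ q hl h0 h1 u)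
      generalize q - 1 = p at *
      calc w.count false * q ^ (m + 1) ≤ p * u.count false * q ^ (m + 1) :=
            Nat.mul_le_mul_right _ h3
        _ = p * q * (u.count false * q ^ m) := by ring
        _ ≤ p * q * (p ^ m * u.length + C) := Nat.mul_le_mul_left _ h2
        _ = p ^ (m + 1) * (q * u.length) + p * q * C := by ring
        _ ≤ p ^ (m + 1) * (w.length + 2 * q) + p * q * C := by gcongr
        _ ≤ _ := by rw [mul_add]; omega

lemma maxZeros_bound (ζ : Bool → List Bool) (q : ℕ) (hl : ∀ a, (ζ a).length = q)
    (h0 : ζ false ≠ List.replicate q false) (h1 : ζ true = List.replicate q true) (m : ℕ) :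
    ∃ C : ℕ, ∀ ℓ, maxZeros ζ ℓ * q ^ m ≤ (q - 1) ^ m * ℓ + C := by
  obtain ⟨C, hC⟩ := main_bound ζ q hl h0 h1 m
  refine ⟨C, fun ℓ => ?_⟩
  by_cases hne : {k : ℕ | ∃ w ∈ substLang ζ, w.length = ℓ ∧ w.count false = k}.Nonempty
  · have hb : BddAbove {k : ℕ | ∃ w ∈ substLang ζ, w.length = ℓ ∧ w.count false = k} := by
      refine ⟨ℓ, ?_⟩
      rintro k ⟨w, _, rfl, rfl⟩
      exact List.count_le_length
    obtain ⟨w, ⟨a, k, _, hw⟩, hlen, hc⟩ := Nat.sSup_mem hne hb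
    unfold maxZeros
    rw [← hc, ← hlen]
    exact hC k a w hw
  · rw [Set.not_nonempty_iff_eq_empty] at hne
    simp [maxZeros, hne]

/-- if ζ(0) ≠ 0^q and ζ(1) = 1^q, then Δ_ℓ/ℓ → 0. -/
theorem maxZeros_div_tendsto_zero
    (ζ : Bool → List Bool) (q : ℕ) (hζ : IsConstLenSubst ζ q)
    (h0 : ζ false ≠ List.replicate q false) (h1 : ζ true = List.replicate q true) :
    Tendsto (fun ℓ : ℕ => (maxZeros ζ ℓ : ℝ) / (ℓ : ℝ)) atTop (𝓝 0) := by
  obtain ⟨hq, hl⟩ := hζ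
  have hq0 : (0 : ℝ) < q := by exact_mod_cast (by omega : 0 < q)
  rw [Metric.tendsto_atTop]
  intro ε hε
  have hr : ((q - 1 : ℕ) : ℝ) / q < 1 := by
    rw [div_lt_one hq0]
    exact_mod_cast (by omega : q - 1 < q)
  obtain ⟨m, hm⟩ := exists_pow_lt_of_lt_one (half_pos hε) hr
  obtain ⟨C, hC⟩ := maxZeros_bound ζ q hl h0 h1 m
  obtain ⟨N, hN⟩ := exists_nat_gt ((C : ℝ) / (ε / 2))
  refine ⟨N + 1, fun ℓ hℓ => ?_⟩
  have hℓ0 : (0 : ℝ) < ℓ := by exact_mod_cast (by omega : 0 < ℓ)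
  have hNℓ : (N : ℝ) ≤ ℓ := by exact_mod_cast (by omega : N ≤ ℓ)
  rw [Real.dist_eq, sub_zero, abs_of_nonneg (by positivity), div_lt_iff₀ hℓ0]
  have hQ : (1 : ℝ) ≤ (q : ℝ) ^ m := one_le_pow₀ (by exact_mod_cast (by omega : 1 ≤ q))
  have h2 : (maxZeros ζ ℓ : ℝ) * (q : ℝ) ^ m ≤ ((q - 1 : ℕ) : ℝ) ^ m * ℓ + C := by
    exact_mod_cast hC ℓ
  rw [div_pow, div_lt_iff₀ (by positivity)] at hm
  rw [div_lt_iff₀ (half_pos hε)] at hN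
  have h3 : (C : ℝ) < ε / 2 * ℓ * (q : ℝ) ^ m := by
    calc (C : ℝ) < N * (ε / 2) := hN
      _ ≤ ℓ * (ε / 2) := by gcongr
      _ = ε / 2 * ℓ * 1 := by ring
      _ ≤ _ := by gcongr
  have h4 : ((q - 1 : ℕ) : ℝ) ^ m * ℓ < ε / 2 * (q : ℝ) ^ m * ℓ := by gcongr
  have h5 : (maxZeros ζ ℓ : ℝ) * (q : ℝ) ^ m < ε * ℓ * (q : ℝ) ^ m := by linarith
  exact lt_of_mul_lt_mul_right h5 (by positivity)
end

section
/- Let ζ be a primitive aperiodic binary substitution of constant length q ≥ 2 with ζ(0) starting with 0, let x = ζ^∞(0) be its fixed point starting with 0, and for ℓ ≥ 1 and n ≥ 2 define δ_ℓ(n) = #(K_ℓ ∩ [1,n)²)/(n² − n). Then there exist constants 0 < c₀ ≤ 1 ≤ c such that for every ℓ ≥ 1 and every n ≥ 2 with K_ℓ ∩ [1,n)² ≠ ∅ one has c₀/ℓ² ≤ δ_ℓ(n) ≤ c/ℓ². -/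
open Filter Topology MeasureTheory

open RQA

namespace RQAProof

def Agree (x : ℕ → Bool) (i j l : ℕ) : Prop := ∀ h, h < l → x (i + h) = x (j + h)

lemma win {Q s t M r : ℕ} (hr : r < Q) (h1 : s / Q + 1 ≤ t) (h2 : t < s / Q + 1 + M) :
    s ≤ Q * t + r ∧ Q * t + r < s + Q * (M + 2) := by
  have h4 := Nat.div_add_mod s Q
  have h5 := Nat.mod_lt s (show 0 < Q by omega)
  have h6 : Q * (s / Q + 1) ≤ Q * t := Nat.mul_le_mul_left _ h1
  have h7 : Q * t ≤ Q * (s / Q + M) := Nat.mul_le_mul_left _ (by omega)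
  rw [Nat.mul_add] at h6 h7
  rw [Nat.mul_add]
  constructor <;> omega

lemma substWord_cons (ζ : Bool → List Bool) (a : Bool) (w : List Bool) :
    substWord ζ (a :: w) = ζ a ++ substWord ζ w := rfl

lemma substWord_length (ζ : Bool → List Bool) (q : ℕ) (h : ∀ a, (ζ a).length = q)
    (w : List Bool) : (substWord ζ w).length = q * w.length := by
  induction w with
  | nil => simp [substWord]
  | cons a w ih => rw [substWord_cons, List.length_append, ih, h, List.length_cons]; ring

lemma iter_length (ζ : Bool → List Bool) (q : ℕ) (h : ∀ a, (ζ a).length = q)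
    (k : ℕ) (a : Bool) : ((substWord ζ)^[k] [a]).length = q ^ k := by
  induction k with
  | zero => simp
  | succ k ih => rw [Function.iterate_succ_apply', substWord_length ζ q h, ih]; ring

lemma substWord_getD (ζ : Bool → List Bool) (q : ℕ) (h : ∀ a, (ζ a).length = q)
    (w : List Bool) (m r : ℕ) (hr : r < q) (hm : m < w.length) :
    (substWord ζ w).getD (q * m + r) false = (ζ (w.getD m false)).getD r false := by
  induction w generalizing m with
  | nil => simp at hm
  | cons a w ih =>
    rw [substWord_cons]
    cases m with
    | zero =>
      rw [List.getD_append _ _ _ _ (by rw [h]; omega)]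
      simp
    | succ m =>
      rw [List.getD_append_right _ _ _ _ (by rw [h]; nlinarith)]
      rw [h]
      have : q * (m + 1) + r - q = q * m + r := by
        rw [Nat.mul_succ]; omega
      rw [this, ih m (by simpa using hm)]
      simp

section
variable {ζ : Bool → List Bool} {q : ℕ} {x : ℕ → Bool}

lemma fix_block (hx : substSeq ζ q x = x) (u r : ℕ) (hr : r < q) :
    x (q * u + r) = (ζ (x u)).getD r false := by
  conv_lhs => rw [← hx]
  unfold substSeq
  rw [Nat.mul_add_div (by omega), Nat.div_eq_of_lt hr, Nat.mul_add_mod, Nat.mod_eq_of_lt hr]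
  simp

lemma fix_iter (hq : 2 ≤ q) (h : ∀ a, (ζ a).length = q) (hx : substSeq ζ q x = x) (k u r : ℕ)
    (hr : r < q ^ k) :
    x (q ^ k * u + r) = ((substWord ζ)^[k] [x u]).getD r false := by
  induction k generalizing r with
  | zero =>
    have : r = 0 := by simpa using hr
    subst this; simp
  | succ k ih =>
    have hq0 : 0 < q := by omega
    have h1 : r / q < q ^ k := by
      rw [Nat.div_lt_iff_lt_mul hq0]; rw [pow_succ] at hr; exact hr
    have h2 := Nat.mod_lt r hq0
    have h3 : r = q * (r / q) + r % q := (Nat.div_add_mod r q).symm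
    rw [Function.iterate_succ_apply']
    rw [h3, substWord_getD ζ q h _ _ _ h2 (by rw [iter_length ζ q h]; exact h1), ← ih _ h1,
      ← fix_block hx _ _ h2]
    congr 1; ring

/-- abstract properties of `x` -/
structure Good (q : ℕ) (x : ℕ → Bool) : Prop where
  hq : 2 ≤ q
  step : ∀ k u v h, h < q ^ k → x u = x v → x (q ^ k * u + h) = x (q ^ k * v + h)
  synd : ∃ M, ∀ s, ∃ t, s ≤ t ∧ t < s + M ∧ x t = false
  zero : x 0 = false
  np : ∀ p N, 1 ≤ p → ∃ i, N ≤ i ∧ x (i + p) ≠ x i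

lemma synd_of_prim (hζ : IsConstLenSubst ζ q) (hprim : IsPrimitive ζ)
    (hx : substSeq ζ q x = x) (b : Bool) :
    ∃ M, ∀ s, ∃ t, s ≤ t ∧ t < s + M ∧ x t = b := by
  obtain ⟨K, _, hK⟩ := hprim
  obtain ⟨hq, hl⟩ := hζ
  refine ⟨q ^ K * (1 + 2), fun s => ?_⟩
  have hpos : 0 < q ^ K := by positivity
  obtain ⟨r, hr, hr2⟩ := List.getElem_of_mem (hK (x (s / q ^ K + 1)) b)
  rw [iter_length ζ q hl] at hr
  have hw := win (M := 1) hr (le_refl (s / q ^ K + 1)) (by omega)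
  refine ⟨q ^ K * (s / q ^ K + 1) + r, hw.1, hw.2, ?_⟩
  · rw [fix_iter hq hl hx K _ r hr, List.getD_eq_getElem _ _ (by rwa [iter_length ζ q hl]), hr2]

lemma good_of (hζ : IsConstLenSubst ζ q)
    (hprim : IsPrimitive ζ) (hap : IsAperiodic ζ)
    (hx0 : x 0 = false) (hx : substSeq ζ q x = x) : Good q x := by
  have hl := hζ.2
  have hq := hζ.1
  refine ⟨hq, ?_, synd_of_prim hζ hprim hx false, hx0, ?_⟩
  · intro k u v h hh huv
    rw [fix_iter hq hl hx k u h hh, fix_iter hq hl hx k v h hh, huv]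
  · intro p N hp
    by_contra hcon
    push Not at hcon
    obtain ⟨y, hy, hyn⟩ := hap
    obtain ⟨i, hi⟩ := hyn p hp
    apply hi
    obtain ⟨a, k, _, s, t, hst⟩ := hy (i + p + 1)
    obtain ⟨M, hM⟩ := synd_of_prim hζ hprim hx a
    obtain ⟨u, hu, _, hua⟩ := hM N
    have hpos : 0 < q ^ k := by positivity
    have hlen := iter_length ζ q hl k a
    rw [← hst] at hlen
    simp only [List.length_append, List.length_ofFn] at hlen
    have key : ∀ j, j < i + p + 1 → x (q ^ k * u + (s.length + j)) = y j := by
      intro j hj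
      rw [fix_iter hq hl hx k u _ (by omega), hua, ← hst]
      rw [List.append_assoc, List.getD_append_right _ _ _ _ (by omega),
        List.getD_append _ _ _ _ (by simp; omega)]
      rw [List.getD_eq_getElem _ _ (by simp; omega), List.getElem_ofFn]
      simp
    rw [← key i (by omega), ← key (i + p) (by omega)]
    rw [← hcon (q ^ k * u + (s.length + i)) (by nlinarith)]
    congr 1
    ring

end

namespace Good
variable {q : ℕ} {x : ℕ → Bool} (G : Good q x)
include G

lemma step1 (u v h : ℕ) (hh : h < q) (e : x u = x v) : x (q * u + h) = x (q * v + h) := by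
  have := G.step 1 u v h (by simpa using hh) e
  simpa using this

lemma exists_diff : ∃ r, r < q ∧ ∀ u v, x u ≠ x v → x (q * u + r) ≠ x (q * v + r) := by
  by_contra hcon
  push Not at hcon
  have hq := G.hq
  have key : ∀ r, r < q → ∀ u v, x (q * u + r) = x (q * v + r) := by
    intro r hr u v
    obtain ⟨a, b, hab, he⟩ := hcon r hr
    have h1 : ∀ u, x (q * u + r) = x (q * a + r) := by
      intro u
      by_cases hu : x u = x a
      · exact G.step1 u a r hr hu
      · have : x u = x b := by
          cases h1 : x u <;> cases h2 : x a <;> cases h3 : x b <;> simp_all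
        rw [he]; exact G.step1 u b r hr this
    rw [h1 u, h1 v]
  obtain ⟨i, _, hi⟩ := G.np q 0 (by omega)
  apply hi
  have h1 := Nat.div_add_mod i q
  have h2 := Nat.mod_lt i (show 0 < q by omega)
  have := key (i % q) h2 (i / q + 1) (i / q)
  rw [h1] at this
  rw [← this]; congr 1
  rw [Nat.mul_succ]; omega

lemma unif_rec (u L : ℕ) : ∃ M, ∀ s, ∃ t, s ≤ t ∧ t < s + M ∧ Agree x u t L := by
  obtain ⟨M, hM⟩ := G.synd
  have hq := G.hq
  have hk : u + L < q ^ (u + L) := Nat.lt_pow_self (by omega)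
  set Q := q ^ (u + L) with hQ
  refine ⟨Q * (M + 2), fun s => ?_⟩
  obtain ⟨t, h1, h2, h3⟩ := hM (s / Q + 1)
  have hw := win (r := u) (by omega) h1 h2
  refine ⟨Q * t + u, hw.1, hw.2, ?_⟩
  · intro h hh
    have := G.step (u + L) 0 t (u + h) (by omega) (by rw [h3, G.zero])
    rw [← hQ] at this
    simpa [add_assoc] using this

lemma lin_rec : ∃ C, 1 ≤ C ∧ ∀ i l, 1 ≤ l → ∀ s, ∃ t, s ≤ t ∧ t < s + C * l ∧ Agree x i t l := by
  have hq := G.hq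
  -- uniform recurrence of two-letter words
  have h2 : ∃ M, ∀ u s, ∃ t, s ≤ t ∧ t < s + M ∧ Agree x u t 2 := by
    have : ∀ w : Bool × Bool, ∃ M, ∀ u, (x u, x (u + 1)) = w →
        ∀ s, ∃ t, s ≤ t ∧ t < s + M ∧ Agree x u t 2 := by
      intro w
      by_cases hw : ∃ u, (x u, x (u + 1)) = w
      · obtain ⟨u, hu⟩ := hw
        obtain ⟨M, hM⟩ := G.unif_rec u 2
        refine ⟨M, fun v hv s => ?_⟩
        obtain ⟨t, a, b, c⟩ := hM s
        refine ⟨t, a, b, fun h hh => ?_⟩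
        rw [← c h hh]
        rw [← hu] at hv
        simp only [Prod.mk.injEq] at hv
        have : h = 0 ∨ h = 1 := by omega
        rcases this with rfl | rfl
        · simpa using hv.1
        · exact hv.2
      · exact ⟨0, fun u hu => (hw ⟨u, hu⟩).elim⟩
    choose M hM using this
    refine ⟨∑ w, M w, fun u s => ?_⟩
    obtain ⟨t, a, b, c⟩ := hM _ u rfl s
    refine ⟨t, a, ?_, c⟩
    have := Finset.single_le_sum (f := M) (fun _ _ => Nat.zero_le _)
      (Finset.mem_univ (x u, x (u + 1)))
    omega
  obtain ⟨M, hM⟩ := h2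
  refine ⟨(M + 2) * q, by nlinarith, fun i l hl s => ?_⟩
  obtain ⟨k, hk1, hk2⟩ : ∃ k, l ≤ q ^ k ∧ q ^ k ≤ q * l := by
    refine ⟨Nat.log q l + 1, (Nat.lt_pow_succ_log_self (by omega) l).le, ?_⟩
    rw [pow_succ, mul_comm]
    exact Nat.mul_le_mul_left _ (Nat.pow_log_le_self q (by omega))
  have hstep := G.step k
  set Q := q ^ k with hQ
  have hQ0 : 0 < Q := by omega
  obtain ⟨t, h1, h2, h3⟩ := hM (i / Q) (s / Q + 1)
  have h4 := Nat.div_add_mod s Q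
  have h5 := Nat.mod_lt s hQ0
  have h6 := Nat.div_add_mod i Q
  have h7 := Nat.mod_lt i hQ0
  have hw := win h7 h1 h2
  refine ⟨Q * t + i % Q, hw.1, ?_, ?_⟩
  · have := hw.2
    have : Q * (M + 2) ≤ (q * l) * (M + 2) := Nat.mul_le_mul_right _ hk2
    nlinarith
  · intro h hh
    by_cases hc : i % Q + h < Q
    · have := hstep _ _ _ hc (h3 0 (by omega))
      have e1 : i + h = Q * (i / Q) + (i % Q + h) := by omega
      rw [e1, add_assoc]; simpa using this
    · have := hstep _ _ (i % Q + h - Q) (by omega) (h3 1 (by omega))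
      rw [Nat.mul_succ, Nat.mul_succ] at this
      have e1 : i + h = Q * (i / Q) + Q + (i % Q + h - Q) := by omega
      have e2 : Q * t + i % Q + h = Q * t + Q + (i % Q + h - Q) := by omega
      rw [e1, e2]; exact this

lemma recog1 : ∃ L, ∀ i j, Agree x i j L → i ≡ j [MOD q] := by
  by_contra hcon
  push Not at hcon
  have hq := G.hq
  have hq0 : 0 < q := by omega
  -- pigeonhole
  have h1 : ∃ e, 0 < e ∧ e < q ∧ ∀ L, ∃ i j, j ≡ i + e [MOD q] ∧ Agree x i j L := by
    by_contra hc
    have hc' : ∀ e, ∃ L, 0 < e → e < q → ∀ i j, j ≡ i + e [MOD q] → ¬ Agree x i j L := by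
      intro e
      by_contra h
      push Not at h
      exact hc ⟨e, (h 0).1, (h 0).2.1, fun L => (h L).2.2⟩
    choose F hF using hc'
    obtain ⟨i, j, hij, hne⟩ := hcon (∑ e ∈ Finset.range q, F e)
    have hi := Nat.mod_lt i hq0
    have hj : (j + (q - i % q)) % q < q := Nat.mod_lt _ hq0
    set e := (j + (q - i % q)) % q with he
    have hcong : j ≡ i + e [MOD q] := by
      have h1 : i + e ≡ i + (j + (q - i % q)) [MOD q] := Nat.ModEq.add_left _ (Nat.mod_modEq _ _)
      have h2 : i + (j + (q - i % q)) ≡ i % q + (j + (q - i % q)) [MOD q] :=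
        Nat.ModEq.add_right _ (Nat.mod_modEq _ _).symm
      have h3 : i % q + (j + (q - i % q)) = j + q := by omega
      rw [h3] at h2
      exact ((h1.trans h2).trans (by simp [Nat.ModEq])).symm
    have he0 : 0 < e := by
      rcases Nat.eq_zero_or_pos e with h | h
      · rw [h] at hcong; exact (hne hcong.symm).elim
      · exact h
    refine hF e he0 hj i j hcong fun h hh => hij h (lt_of_lt_of_le hh ?_)
    exact Finset.single_le_sum (f := F) (fun _ _ => Nat.zero_le _) (Finset.mem_range.2 hj)
  obtain ⟨e, he0, heq, hbad⟩ := h1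
  -- R e
  have hR : ∀ L i, ∃ j, j ≡ i + e [MOD q] ∧ Agree x i j L := by
    intro L i
    obtain ⟨M, hM⟩ := G.unif_rec (i / q) (L + 1)
    obtain ⟨i0, j0, hc, hag⟩ := hbad (q * (M + 2) + L)
    obtain ⟨t, h1, h2, h3⟩ := hM (i0 / q + 1)
    have h4 := Nat.div_add_mod i0 q
    have h5 := Nat.mod_lt i0 hq0
    have h6 := Nat.div_add_mod i q
    have h7 := Nat.mod_lt i hq0
    obtain ⟨d, hd⟩ : ∃ d, q * t + i % q = i0 + d := by
      exact Nat.exists_eq_add_of_le (win h7 h1 h2).1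
    have hd2 : d < q * (M + 2) := by
      have := (win h7 h1 h2).2
      omega
    refine ⟨j0 + d, ?_, fun h hh => ?_⟩
    · have e1 : j0 + d ≡ i0 + e + d [MOD q] := hc.add_right d
      have e2 : i0 + e + d = q * t + (i % q + e) := by omega
      rw [e2] at e1
      refine e1.trans ?_
      have e3 : i + e = q * (i / q) + (i % q + e) := by omega
      rw [e3]
      simp [Nat.ModEq]
    · have e1 := hag (d + h) (by omega)
      rw [← add_assoc, ← add_assoc, ← hd] at e1
      rw [← e1]
      have h8 := Nat.div_add_mod (i % q + h) q
      have h9 := Nat.mod_lt (i % q + h) hq0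
      have h10 : (i % q + h) / q < L + 1 := by
        rw [Nat.div_lt_iff_lt_mul hq0]; nlinarith
      have := G.step1 _ _ _ h9 (h3 _ h10)
      rw [Nat.mul_add, Nat.mul_add] at this
      have e2 : i + h = q * (i / q) + q * ((i % q + h) / q) + (i % q + h) % q := by omega
      have e3 : q * t + i % q + h = q * t + q * ((i % q + h) / q) + (i % q + h) % q := by omega
      rw [e2, e3, this]
  have hRm : ∀ m L i, ∃ j, j ≡ i + m * e [MOD q] ∧ Agree x i j L := by
    intro m
    induction m with
    | zero => intro L i; exact ⟨i, by simp [Nat.ModEq], fun _ _ => rfl⟩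
    | succ m ih =>
      intro L i
      obtain ⟨j, hj, hj2⟩ := ih L i
      obtain ⟨k, hk, hk2⟩ := hR L j
      refine ⟨k, ?_, fun h hh => (hj2 h hh).trans (hk2 h hh)⟩
      have := hk.trans (hj.add_right e)
      rwa [add_assoc, ← Nat.succ_mul] at this
  -- d = gcd
  set d := Nat.gcd e q with hd
  have hd0 : 0 < d := Nat.gcd_pos_of_pos_left _ he0
  have hdq : d ∣ q := Nat.gcd_dvd_right _ _
  have hde : d ≤ e := Nat.gcd_le_left _ he0
  obtain ⟨c, hcq⟩ := hdq
  have hc2 : 2 ≤ c := by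
    by_contra h
    have : c ≤ 1 := by omega
    nlinarith
  obtain ⟨m, hm⟩ : ∃ m, m * e ≡ d [MOD q] := by
    obtain ⟨m, -, hm⟩ := Nat.exists_mul_mod_eq_gcd (k := q) (n := e) (by omega)
    refine ⟨m, ?_⟩
    have hdlt : d < q := by omega
    rw [mul_comm]
    rw [Nat.ModEq, hm, Nat.mod_eq_of_lt hdlt]
  have hblock : ∀ n, ∃ u, Agree x (d * n) (q * u) q := by
    intro n
    obtain ⟨j, hj, hj2⟩ := hRm (m * ((q - 1) * n)) q (d * n)
    have h1 : j ≡ 0 [MOD q] := by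
      refine hj.trans ?_
      have : m * ((q - 1) * n) * e = m * e * ((q - 1) * n) := by ring
      rw [this]
      refine ((hm.mul_right _).add_left _).trans ?_
      have : d * n + d * ((q - 1) * n) = q * (d * n) := by
        obtain ⟨q', rfl⟩ : ∃ q', q = q' + 1 := ⟨q - 1, by omega⟩
        simp only [Nat.add_sub_cancel]; ring
      rw [this]
      exact Nat.modEq_zero_iff_dvd.2 (Nat.dvd_mul_right _ _)
    obtain ⟨u, rfl⟩ := (Nat.modEq_zero_iff_dvd.1 h1)
    exact ⟨u, hj2⟩
  -- at most two words
  have hab : ∀ u v, x u = x v → Agree x (q * u) (q * v) q :=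
    fun u v huv h hh => G.step1 u v h hh huv
  have h2d : 2 * d ≤ q := by nlinarith
  -- determinism
  have htwo : ∀ a b n, Agree x (d * a) (d * b) d → ¬ Agree x (d * (a + 1)) (d * (b + 1)) d →
      Agree x (d * n) (d * a) d := by
    intro a b n hab1 hab2
    obtain ⟨ua, hua⟩ := hblock a
    obtain ⟨ub, hub⟩ := hblock b
    obtain ⟨un, hun⟩ := hblock n
    have hne : x ua ≠ x ub := by
      intro h
      apply hab2
      intro h' hh'
      have e1 := hua (d + h') (by omega)
      have e2 := hub (d + h') (by omega)
      have e3 := hab _ _ h (d + h') (by omega)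
      rw [Nat.mul_succ, Nat.mul_succ, add_assoc, add_assoc, e1, e2, e3]
    intro h hh
    have e1 := hua h (by omega)
    have e2 := hub h (by omega)
    have e3 := hun h (by omega)
    by_cases hun' : x un = x ua
    · rw [e3, e1, hab _ _ hun' h (by omega)]
    · have : x un = x ub := by
        clear * - hun' hne
        revert hun' hne
        generalize x un = p, x ua = q, x ub = r
        revert p q r
        decide
      rw [hab1 h hh, e3, e2, hab _ _ this h (by omega)]
  have hdet : ∀ a b, Agree x (d * a) (d * b) d → Agree x (d * (a + 1)) (d * (b + 1)) d := by
    intro a b hab1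
    by_contra hab2
    apply hab2
    intro h hh
    rw [htwo a b (a + 1) hab1 hab2 h hh, htwo a b (b + 1) hab1 hab2 h hh]
  -- eventual periodicity: find a < b with equal blocks
  obtain ⟨a, b, hlt, hab1⟩ : ∃ a b, a < b ∧ Agree x (d * a) (d * b) d := by
    obtain ⟨a, b, hne, heq⟩ := Finite.exists_ne_map_eq_of_infinite
      (fun n : ℕ => fun h : Fin d => x (d * n + h))
    have hA : Agree x (d * a) (d * b) d := fun h hh => congrFun heq ⟨h, hh⟩
    rcases lt_or_gt_of_ne hne with h | h
    · exact ⟨a, b, h, hA⟩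
    · exact ⟨b, a, h, fun h hh => (hA h hh).symm⟩
  have hall : ∀ m, Agree x (d * (a + m)) (d * (b + m)) d := by
    intro m
    induction m with
    | zero => exact hab1
    | succ m ih => exact hdet _ _ ih
  obtain ⟨p, hp⟩ : ∃ p, b = a + p := Nat.exists_eq_add_of_le hlt.le
  obtain ⟨i, hi, hi2⟩ := G.np (d * p) (d * a) (Nat.mul_pos hd0 (by omega))
  apply hi2
  have h4 := Nat.div_add_mod i d
  have h5 := Nat.mod_lt i hd0
  have h6 : a ≤ i / d := (Nat.le_div_iff_mul_le hd0).2 (by linarith)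
  have := hall (i / d - a) (i % d) h5
  have e1 : a + (i / d - a) = i / d := by omega
  have e2 : b + (i / d - a) = i / d + p := by omega
  rw [e1, e2, h4] at this
  rw [this]
  congr 1
  rw [Nat.mul_add]; omega

lemma recogk : ∃ D, 1 ≤ D ∧ ∀ k i j l, D * q ^ k ≤ l + 2 → Agree x i j l →
    i ≡ j [MOD q ^ k] := by
  obtain ⟨L, hL⟩ := G.recog1
  obtain ⟨r0, hr0, hdiff⟩ := G.exists_diff
  have hq := G.hq
  have hq0 : 0 < q := by omega
  refine ⟨L + 2, by omega, fun k => ?_⟩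
  induction k with
  | zero => intro i j l _ _; simp [Nat.modEq_one]
  | succ k ih =>
    intro i j l hl hag
    have hp : 1 ≤ q ^ (k + 1) := Nat.one_le_pow _ _ hq0
    have hLl : L ≤ l := by nlinarith
    have h1 : i ≡ j [MOD q] := hL i j fun h hh => hag h (by omega)
    have hi := Nat.div_add_mod i q
    have hj := Nat.div_add_mod j q
    have hr : i % q = j % q := h1
    have hrlt := Nat.mod_lt j hq0
    have hdm := Nat.div_add_mod l q
    have hdl := Nat.mod_lt l hq0
    have h2 : i / q + 1 ≡ j / q + 1 [MOD q ^ k] := by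
      apply ih _ _ (l / q - 1)
      · have : q * ((L + 2) * q ^ k) ≤ l + 2 := by
          calc _ = (L + 2) * q ^ (k + 1) := by ring
            _ ≤ _ := hl
        have : (L + 2) * q ^ k < l / q + 2 := by
          by_contra hc
          have : q * (l / q + 2) ≤ q * ((L + 2) * q ^ k) := Nat.mul_le_mul_left _ (by omega)
          nlinarith
        omega
      · intro h hh
        by_contra hne
        apply hdiff _ _ hne
        have hb : q * (h + 2) ≤ q * (l / q) := Nat.mul_le_mul_left _ (by omega)
        have e1 : q * (h + 2) = q * h + q + q := by ring
        have := hag (q * h + q + r0 - i % q) (by omega)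
        have e2 : q * (i / q + 1 + h) + r0 = i + (q * h + q + r0 - i % q) := by
          have : q * (i / q + 1 + h) = q * (i / q) + q + q * h := by ring
          omega
        have e3 : q * (j / q + 1 + h) + r0 = j + (q * h + q + r0 - i % q) := by
          have : q * (j / q + 1 + h) = q * (j / q) + q + q * h := by ring
          omega
        rw [e2, e3, this]
    have h3 : i / q ≡ j / q [MOD q ^ k] := Nat.ModEq.add_right_cancel' 1 h2
    have h4 : q * (i / q) ≡ q * (j / q) [MOD q * q ^ k] := h3.mul_left' q
    have h5 := h4.add_right (j % q)
    rw [hj, ← hr, hi, ← pow_succ'] at h5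
    exact h5

lemma recog : ∃ D, 1 ≤ D ∧ ∀ l, 1 ≤ l → ∃ k, q ^ k ≤ l ∧ l ≤ D * q ^ k ∧
    ∀ i j, Agree x i j l → i ≡ j [MOD q ^ k] := by
  obtain ⟨D, hD, h⟩ := G.recogk
  have hq := G.hq
  refine ⟨D * q, by nlinarith, fun l hl => ?_⟩
  by_cases hlD : l < D
  · exact ⟨0, by simpa using hl, by simp; nlinarith, fun i j _ => by simp [Nat.modEq_one]⟩
  · have h1 : l / D ≠ 0 := by
      have : 1 ≤ l / D := (Nat.le_div_iff_mul_le (by omega)).2 (by omega)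
      omega
    have h2 := Nat.pow_log_le_self q h1
    have h3 : l / D < q ^ (Nat.log q (l / D) + 1) := Nat.lt_pow_succ_log_self (by omega) _
    have h4 : D * q ^ Nat.log q (l / D) ≤ l := by
      have := (Nat.le_div_iff_mul_le (show 0 < D by omega)).1 h2
      linarith
    refine ⟨Nat.log q (l / D), by nlinarith, ?_, fun i j hij => h _ i j l (by omega) hij⟩
    rw [Nat.div_lt_iff_lt_mul (by omega)] at h3
    rw [pow_succ] at h3
    nlinarith

lemma residue {k l i j i' j' : ℕ} (hkl : q ^ k ≤ l)
    (hrec : ∀ i j, Agree x i j l → i ≡ j [MOD q ^ k])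
    (h : (i, j) ∈ Kset x l) (h' : (i', j') ∈ Kset x l) :
    ¬ (i - 1) % q ^ k < (i' - 1) % q ^ k := by
  intro hlt
  obtain ⟨h1, h2, _, _, hag, hd, _⟩ := h
  obtain ⟨h1', h2', _, _, hag', hd', _⟩ := h'
  simp only at *
  have hq := G.hq
  have hpos : 0 < q ^ k := by positivity
  have hstep := G.step k
  have hc := hrec _ _ hag
  have hc' := hrec _ _ hag'
  have hD := hd (by omega) (by omega)
  have hD' := hd' (by omega) (by omega)
  obtain ⟨a, rfl⟩ : ∃ a, i = a + 1 := ⟨i - 1, by omega⟩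
  obtain ⟨b, rfl⟩ : ∃ a, j = a + 1 := ⟨j - 1, by omega⟩
  obtain ⟨a', rfl⟩ : ∃ a, i' = a + 1 := ⟨i' - 1, by omega⟩
  obtain ⟨b', rfl⟩ : ∃ a, j' = a + 1 := ⟨j' - 1, by omega⟩
  simp only [Nat.add_sub_cancel] at *
  have hc : a % q ^ k = b % q ^ k := Nat.ModEq.add_right_cancel' 1 hc
  have hc' : a' % q ^ k = b' % q ^ k := Nat.ModEq.add_right_cancel' 1 hc'
  set Q := q ^ k
  have ea := Nat.div_add_mod a Q
  have eb := Nat.div_add_mod b Q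
  have ea' := Nat.div_add_mod a' Q
  have eb' := Nat.div_add_mod b' Q
  have la := Nat.mod_lt a hpos
  have la' := Nat.mod_lt a' hpos
  have n1 : x (a / Q) ≠ x (b / Q) := by
    intro h
    have := hstep _ _ _ la h
    rw [ea, hc, eb] at this
    exact hD this
  have n2 : x (a' / Q) ≠ x (b' / Q) := by
    intro h
    have := hstep _ _ _ la' h
    rw [ea', hc', eb'] at this
    exact hD' this
  have h5 := hag (a' % Q - a % Q - 1) (by omega)
  have e1 : a + 1 + (a' % Q - a % Q - 1) = Q * (a / Q) + a' % Q := by omega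
  have e2 : b + 1 + (a' % Q - a % Q - 1) = Q * (b / Q) + a' % Q := by omega
  rw [e1, e2] at h5
  apply hD'
  have : (x (a / Q) = x (a' / Q) ∧ x (b / Q) = x (b' / Q)) ∨
      (x (a / Q) = x (b' / Q) ∧ x (b / Q) = x (a' / Q)) := by
    cases h1 : x (a / Q) <;> cases h2 : x (b / Q) <;> cases h3 : x (a' / Q) <;>
      cases h4 : x (b' / Q) <;> simp_all
  rcases this with ⟨p1, p2⟩ | ⟨p1, p2⟩
  · have f1 := hstep _ _ _ la' p1
    have f2 := hstep _ _ _ la' p2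
    rw [f1, f2, ea', hc', eb'] at h5
    exact h5
  · have f1 := hstep _ _ _ la' p1
    have f2 := hstep _ _ _ la' p2
    rw [f1, f2, ea', hc', eb'] at h5
    exact h5.symm

lemma upper : ∃ D, 1 ≤ D ∧ ∀ l n, 1 ≤ l → 2 ≤ n →
    (Kset x l ∩ {p : ℕ × ℕ | p.1 < n ∧ p.2 < n}).Nonempty →
    (Kset x l ∩ {p : ℕ × ℕ | p.1 < n ∧ p.2 < n}).ncard * l ^ 2 ≤
      4 * D ^ 2 * (n * (n - 1)) := by
  obtain ⟨D, hD, h⟩ := G.recog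
  refine ⟨D, hD, fun l n hl hn hne => ?_⟩
  obtain ⟨k, hk1, hk2, hrec⟩ := h l hl
  have hq := G.hq
  have hpos : 0 < q ^ k := by positivity
  have hres := fun i j i' j' => G.residue (i := i) (j := j) (i' := i') (j' := j') hk1 hrec
  set Q := q ^ k with hQ
  obtain ⟨⟨i0, j0⟩, hK0, hb1, hb2⟩ := hne
  have hK0' := hK0
  obtain ⟨g1, g2, _, gne, gag, _⟩ := hK0'
  simp only at *
  have hQn : Q ≤ n - 1 := by
    have hc := hrec _ _ gag
    rcases lt_or_gt_of_ne gne with hlt | hlt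
    · have := Nat.le_of_dvd (by omega) ((Nat.modEq_iff_dvd' hlt.le).1 hc)
      omega
    · have := Nat.le_of_dvd (by omega) ((Nat.modEq_iff_dvd' hlt.le).1 hc.symm)
      omega
  set r := (i0 - 1) % Q with hr
  set T : Finset ℕ := (Finset.Ico 1 n).filter (fun i => (i - 1) % Q = r) with hT
  have hTc : T.card ≤ (n - 1) / Q + 1 := by
    rw [← Finset.card_range ((n - 1) / Q + 1)]
    apply Finset.card_le_card_of_injOn (fun i => (i - 1) / Q)
    · intro i hi
      simp only [hT, Finset.coe_filter, Finset.mem_Ico, Set.mem_setOf_eq] at hi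
      simp only [Finset.coe_range, Set.mem_Iio]
      have : (i - 1) / Q ≤ (n - 1) / Q := Nat.div_le_div_right (by omega)
      omega
    · intro i hi j hj hij
      simp only [hT, Finset.coe_filter, Finset.mem_Ico, Set.mem_setOf_eq] at hi hj hij
      have e1 := Nat.div_add_mod (i - 1) Q
      have e2 := Nat.div_add_mod (j - 1) Q
      rw [hij, hi.2] at e1
      rw [hj.2] at e2
      omega
  have hsub : (Kset x l ∩ {p : ℕ × ℕ | p.1 < n ∧ p.2 < n}) ⊆ ((T ×ˢ T : Finset (ℕ × ℕ)) : Set (ℕ × ℕ)) := by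
    rintro ⟨i, j⟩ ⟨hK, hi, hj⟩
    have hK' := hK
    obtain ⟨f1, f2, _, fne, fag, _⟩ := hK'
    simp only at *
    have hri : (i - 1) % Q = r := by
      have := hres i j i0 j0 hK hK0
      have := hres i0 j0 i j hK0 hK
      omega
    have hrj : (j - 1) % Q = (i - 1) % Q := by
      have hc := hrec _ _ fag
      obtain ⟨a, rfl⟩ : ∃ a, i = a + 1 := ⟨i - 1, by omega⟩
      obtain ⟨b, rfl⟩ : ∃ a, j = a + 1 := ⟨j - 1, by omega⟩
      exact (Nat.ModEq.add_right_cancel' 1 hc).symm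
    simp only [Finset.coe_product, Set.mem_prod, Finset.mem_coe, hT, Finset.mem_filter,
      Finset.mem_Ico]
    exact ⟨⟨⟨f1, hi⟩, hri⟩, ⟨⟨f2, hj⟩, hrj.trans hri⟩⟩
  have hcard := Set.ncard_le_ncard hsub (Finset.finite_toSet _)
  rw [Set.ncard_coe_finset, Finset.card_product] at hcard
  have hN : T.card * Q ≤ 2 * (n - 1) := by
    have h1 : (n - 1) / Q * Q ≤ n - 1 := Nat.div_mul_le_self _ _
    calc T.card * Q ≤ ((n - 1) / Q + 1) * Q := Nat.mul_le_mul_right _ hTc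
      _ = (n - 1) / Q * Q + Q := by ring
      _ ≤ _ := by omega
  calc _ ≤ (T.card * T.card) * (D * Q) ^ 2 := by gcongr
    _ = D ^ 2 * (T.card * Q) ^ 2 := by ring
    _ ≤ D ^ 2 * (2 * (n - 1)) ^ 2 := by gcongr
    _ = 4 * D ^ 2 * ((n - 1) * (n - 1)) := by ring
    _ ≤ 4 * D ^ 2 * (n * (n - 1)) := by gcongr; omega

lemma lower : ∃ C, 1 ≤ C ∧ ∀ l n, 1 ≤ l → 2 ≤ n →
    (Kset x l ∩ {p : ℕ × ℕ | p.1 < n ∧ p.2 < n}).Nonempty →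
    n * (n - 1) ≤ 72 * C ^ 2 * l ^ 2 *
      (Kset x l ∩ {p : ℕ × ℕ | p.1 < n ∧ p.2 < n}).ncard := by
  obtain ⟨C, hC, h⟩ := G.lin_rec
  refine ⟨C, hC, fun l n hl hn hne => ?_⟩
  have hfin : (Kset x l ∩ {p : ℕ × ℕ | p.1 < n ∧ p.2 < n}).Finite := by
    refine Set.Finite.subset ((Finset.range n ×ˢ Finset.range n).finite_toSet) ?_
    rintro ⟨i, j⟩ ⟨_, hi, hj⟩
    simp only [Finset.coe_product, Set.mem_prod, Finset.coe_range, Set.mem_Iio]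
    exact ⟨hi, hj⟩
  set S := Kset x l ∩ {p : ℕ × ℕ | p.1 < n ∧ p.2 < n} with hS
  have hS1 : 1 ≤ S.ncard := (Set.ncard_pos hfin).2 hne
  obtain ⟨⟨i0, j0⟩, ⟨g1, g2, _, gne, gag, gd, gd2⟩, hb1, hb2⟩ := hne
  simp only at *
  set W := C * (l + 2) with hW
  have hW0 : 0 < W := by positivity
  have hWl : W ≤ 3 * C * l := by
    rw [hW]; nlinarith
  have hnn : n * (n - 1) ≤ 2 * (n - 1) ^ 2 := by
    obtain ⟨m, rfl⟩ : ∃ m, n = m + 2 := ⟨n - 2, by omega⟩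
    simp only [show m + 2 - 1 = m + 1 by omega]
    nlinarith
  have hmain : n * (n - 1) ≤ 8 * W ^ 2 * S.ncard := by
    by_cases hc : n - 1 < W
    · calc n * (n - 1) ≤ 2 * (n - 1) ^ 2 := hnn
        _ ≤ 2 * W ^ 2 := by gcongr
        _ ≤ 8 * W ^ 2 * 1 := by nlinarith [sq_nonneg W]
        _ ≤ _ := by gcongr
    · set N := (n - 1) / W with hN
      have hN1 : 1 ≤ N := (Nat.le_div_iff_mul_le hW0).2 (by omega)
      have hNW : N * W ≤ n - 1 := Nat.div_mul_le_self _ _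
      have hlt : n - 1 < W * (N + 1) := Nat.lt_mul_div_succ _ hW0
      have hcard : N * N ≤ S.ncard := by
        choose f hf1 hf2 hf3 using h (i0 - 1) (l + 2) (by omega)
        choose g hg1 hg2 hg3 using h (j0 - 1) (l + 2) (by omega)
        have hw : ∀ m t, m * W ≤ t → t < m * W + C * (l + 2) → t / W = m := by
          intro m t h1 h2
          apply Nat.div_eq_of_lt_le h1
          rw [Nat.succ_mul]; omega
        have hbd : ∀ m t, m < N → t < m * W + C * (l + 2) → t + 1 < n := by
          intro m t hm ht
          have : (m + 1) * W ≤ N * W := Nat.mul_le_mul_right _ hm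
          rw [Nat.succ_mul] at this
          omega
        have e1 : ((Finset.range N ×ˢ Finset.range N : Finset (ℕ × ℕ)) : Set (ℕ × ℕ)).ncard
            = N * N := by
          rw [Set.ncard_coe_finset, Finset.card_product, Finset.card_range]
        rw [← e1]
        apply Set.ncard_le_ncard_of_injOn
          (fun p : ℕ × ℕ => (f (p.1 * W) + 1, g (p.2 * W) + 1)) _ _ hfin
        · rintro ⟨a, b⟩ hab
          simp only [Finset.coe_product, Set.mem_prod, Finset.coe_range, Set.mem_Iio] at hab
          have A1 := hf3 (a * W)
          have A2 := hg3 (b * W)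
          have hdiff0 : x (f (a * W)) ≠ x (g (b * W)) := by
            have := gd (by omega) (by omega)
            have B1 := A1 0 (by omega)
            have B2 := A2 0 (by omega)
            simp only [Nat.add_zero] at B1 B2
            rwa [← B1, ← B2]
          have tr : ∀ h, h < l + 1 → x (i0 + h) = x (f (a * W) + 1 + h) ∧
              x (j0 + h) = x (g (b * W) + 1 + h) := by
            intro h hh
            have B1 := A1 (h + 1) (by omega)
            have B2 := A2 (h + 1) (by omega)
            rw [show i0 - 1 + (h + 1) = i0 + h by omega] at B1
            rw [show j0 - 1 + (h + 1) = j0 + h by omega] at B2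
            rw [B1, B2]
            constructor <;> (congr 1; omega)
          refine ⟨⟨by simp, by simp, hl, ?_, ?_, ?_, ?_⟩, ?_, ?_⟩
          · intro heq
            simp only [Nat.add_right_cancel_iff] at heq
            exact hdiff0 (by rw [heq])
          · intro h hh
            have := tr h (by omega)
            simp only
            rw [← this.1, ← this.2]; exact gag h hh
          · intro _ _; simpa using hdiff0
          · have := tr l (by omega)
            simp only
            rw [← this.1, ← this.2]; exact gd2
          · exact hbd a _ hab.1 (hf2 _)
          · exact hbd b _ hab.2 (hg2 _)
        · rintro ⟨a, b⟩ _ ⟨a', b'⟩ _ heq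
          simp only [Prod.mk.injEq, Nat.add_right_cancel_iff] at heq
          have p1 := hw a _ (hf1 _) (hf2 _)
          have p2 := hw a' _ (hf1 _) (hf2 _)
          have p3 := hw b _ (hg1 _) (hg2 _)
          have p4 := hw b' _ (hg1 _) (hg2 _)
          rw [heq.1] at p1
          rw [heq.2] at p3
          rw [← p1, ← p3, p2, p4]
      have h2 : n - 1 ≤ 2 * W * N := by nlinarith
      calc n * (n - 1) ≤ 2 * (n - 1) ^ 2 := hnn
        _ ≤ 2 * (2 * W * N) ^ 2 := by gcongr
        _ = 8 * W ^ 2 * (N * N) := by ring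
        _ ≤ _ := by gcongr
  calc _ ≤ 8 * W ^ 2 * S.ncard := hmain
    _ ≤ 8 * (3 * C * l) ^ 2 * S.ncard := by gcongr
    _ = _ := by ring

end Good
end RQAProof


/-- there are constants 0 < c₀ ≤ 1 ≤ c with
c₀/ℓ² ≤ δ_ℓ(n) ≤ c/ℓ² whenever K_ℓ ∩ [1,n)² ≠ ∅. -/
theorem deltaK_bounds
    (ζ : Bool → List Bool) (q : ℕ) (hζ : IsConstLenSubst ζ q)
    (hprim : IsPrimitive ζ) (hap : IsAperiodic ζ)
    (hζ0 : (ζ false).head? = some false)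
    (x : ℕ → Bool) (hx0 : x 0 = false) (hxfix : substSeq ζ q x = x) :
    ∃ c₀ c : ℝ, 0 < c₀ ∧ c₀ ≤ 1 ∧ 1 ≤ c ∧
      ∀ ℓ n : ℕ, 1 ≤ ℓ → 2 ≤ n →
        (Kset x ℓ ∩ {p : ℕ × ℕ | p.1 < n ∧ p.2 < n}).Nonempty →
        c₀ / (ℓ : ℝ) ^ 2 ≤ deltaK x ℓ n ∧ deltaK x ℓ n ≤ c / (ℓ : ℝ) ^ 2 := by
  have G := RQAProof.good_of hζ hprim hap hx0 hxfix
  obtain ⟨D, hD, hup⟩ := G.upper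
  obtain ⟨C, hC, hlo⟩ := G.lower
  have hC' : (1 : ℝ) ≤ C := by exact_mod_cast hC
  have hD' : (1 : ℝ) ≤ D := by exact_mod_cast hD
  refine ⟨1 / (72 * (C : ℝ) ^ 2), 4 * (D : ℝ) ^ 2, by positivity, ?_, by nlinarith, ?_⟩
  · rw [div_le_one (by positivity)]; nlinarith
  intro l n hl hn hne
  have h1 := hup l n hl hn hne
  have h2 := hlo l n hl hn hne
  unfold deltaK
  set S := (Kset x l ∩ {p : ℕ × ℕ | p.1 < n ∧ p.2 < n}).ncard
  have hl' : (1 : ℝ) ≤ l := by exact_mod_cast hl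
  have hn' : (2 : ℝ) ≤ n := by exact_mod_cast hn
  have h1' : (S : ℝ) * (l : ℝ) ^ 2 ≤ 4 * (D : ℝ) ^ 2 * ((n : ℝ) * ((n : ℝ) - 1)) := by
    have : ((S * l ^ 2 : ℕ) : ℝ) ≤ ((4 * D ^ 2 * (n * (n - 1)) : ℕ) : ℝ) := by exact_mod_cast h1
    push_cast [Nat.cast_sub (show 1 ≤ n by omega)] at this
    exact this
  have h2' : (n : ℝ) * ((n : ℝ) - 1) ≤ 72 * (C : ℝ) ^ 2 * (l : ℝ) ^ 2 * S := by
    have : ((n * (n - 1) : ℕ) : ℝ) ≤ ((72 * C ^ 2 * l ^ 2 * S : ℕ) : ℝ) := by exact_mod_cast h2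
    push_cast [Nat.cast_sub (show 1 ≤ n by omega)] at this
    exact this
  have hpos : (0 : ℝ) < (n : ℝ) ^ 2 - n := by nlinarith
  constructor
  · rw [div_div, div_le_div_iff₀ (by positivity) hpos]
    nlinarith
  · rw [div_le_div_iff₀ hpos (by positivity)]
    nlinarith
end

section
/- Let ζ be a primitive aperiodic binary substitution of constant length q ≥ 2 with ζ(0) starting with 0 and x = ζ^∞(0). Then the series Σ_{ℓ ∈ L} 1/ℓ converges, where L = {ℓ ∈ ℕ : K_ℓ ≠ ∅} is the set of lengths ℓ for which there exists an inner line of length exactly ℓ in the infinite symbolic recurrence plot RP(x,∞,ε₀). -/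
open Filter Topology MeasureTheory

namespace RQA

/-- the word of length `n` at position `s` -/
def wd (x : ℕ → Bool) (s n : ℕ) : List Bool := (List.range n).map (fun t => x (s + t))

lemma wd_length (x : ℕ → Bool) (s n : ℕ) : (wd x s n).length = n := by simp [wd]

lemma wd_add (x : ℕ → Bool) (s m n : ℕ) : wd x s (m + n) = wd x s m ++ wd x (s + m) n := by
  simp [wd, List.range_add, Function.comp_def, add_assoc]

lemma substWord_append (ζ : Bool → List Bool) (u v : List Bool) :
    substWord ζ (u ++ v) = substWord ζ u ++ substWord ζ v := by
  induction u with
  | nil => simp [substWord]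
  | cons a u ih =>
    simp only [substWord, List.cons_append, List.foldr_cons, List.append_assoc] at ih ⊢
    rw [ih]

lemma fix_apply {ζ : Bool → List Bool} {q : ℕ} {x : ℕ → Bool}
    (hxfix : substSeq ζ q x = x) (m r : ℕ) (hr : r < q) :
    x (q * m + r) = (ζ (x m)).getD r false := by
  conv_lhs => rw [← hxfix]
  unfold substSeq
  have hq : 0 < q := by omega
  rw [Nat.mul_add_div hq, Nat.mul_add_mod, Nat.mod_eq_of_lt hr, Nat.div_eq_of_lt hr, add_zero]

lemma wd_block {ζ : Bool → List Bool} {q : ℕ} {x : ℕ → Bool} (hζ : IsConstLenSubst ζ q)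
    (hxfix : substSeq ζ q x = x) (m : ℕ) : ζ (x m) = wd x (q * m) q := by
  apply List.ext_getElem
  · rw [wd_length, hζ.2]
  · intro r h1 h2
    rw [wd_length] at h2
    simp [wd, fix_apply hxfix m r h2, List.getElem?_eq_getElem h1]

lemma substWord_wd {ζ : Bool → List Bool} {q : ℕ} {x : ℕ → Bool} (hζ : IsConstLenSubst ζ q)
    (hxfix : substSeq ζ q x = x) (s n : ℕ) : substWord ζ (wd x s n) = wd x (q * s) (q * n) := by
  induction n with
  | zero => simp [wd, substWord]
  | succ n ih =>
    rw [wd_add, substWord_append, ih, mul_add, mul_one, wd_add]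
    congr 1
    rw [← mul_add, ← wd_block hζ hxfix]
    simp [wd, substWord]

lemma substWord_iter_wd {ζ : Bool → List Bool} {q : ℕ} {x : ℕ → Bool} (hζ : IsConstLenSubst ζ q)
    (hxfix : substSeq ζ q x = x) (k s n : ℕ) :
    (substWord ζ)^[k] (wd x s n) = wd x (q ^ k * s) (q ^ k * n) := by
  induction k with
  | zero => simp
  | succ k ih =>
    rw [Function.iterate_succ_apply', ih, substWord_wd hζ hxfix]
    congr 1 <;> ring

lemma iter_single {ζ : Bool → List Bool} {q : ℕ} {x : ℕ → Bool} (hζ : IsConstLenSubst ζ q)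
    (hxfix : substSeq ζ q x = x) (k s : ℕ) :
    (substWord ζ)^[k] [x s] = wd x (q ^ k * s) (q ^ k) := by
  have := substWord_iter_wd hζ hxfix k s 1
  simpa [wd] using this

lemma prim_blocks {ζ : Bool → List Bool} {q : ℕ} {x : ℕ → Bool} (hζ : IsConstLenSubst ζ q)
    (hxfix : substSeq ζ q x = x) (hprim : IsPrimitive ζ) :
    ∃ k, ∀ m, ∀ b, ∃ r < q ^ k, x (q ^ k * m + r) = b := by
  obtain ⟨k, -, h⟩ := hprim
  refine ⟨k, fun m b => ?_⟩
  have := h (x m) b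
  rw [iter_single hζ hxfix] at this
  simpa [wd] using this

lemma pow_apply {ζ : Bool → List Bool} {q : ℕ} {x : ℕ → Bool} (hζ : IsConstLenSubst ζ q)
    (hxfix : substSeq ζ q x = x) (k m m' r : ℕ) (hr : r < q ^ k) (h : x m = x m') :
    x (q ^ k * m + r) = x (q ^ k * m' + r) := by
  have h1 := iter_single hζ hxfix k m
  rw [h, iter_single hζ hxfix k m'] at h1
  have h2 := congrArg (fun l => l.getD r false) h1
  simpa [wd, hr] using h2.symm

/-- not eventually periodic -/
lemma not_evper {ζ : Bool → List Bool} {q : ℕ} {x : ℕ → Bool} (hζ : IsConstLenSubst ζ q)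
    (hxfix : substSeq ζ q x = x) (hprim : IsPrimitive ζ) (hap : IsAperiodic ζ)
    (i p : ℕ) (hp : 1 ≤ p) (h : ∀ m, i ≤ m → x (m + p) = x m) : False := by
  obtain ⟨y, hy, hyp⟩ := hap
  obtain ⟨t, ht⟩ := hyp p hp
  obtain ⟨T, hT⟩ : ∃ T, T = t + p + 1 := ⟨_, rfl⟩
  obtain ⟨a, k, -, u, v, huv⟩ := hy T
  obtain ⟨K, hK⟩ := prim_blocks hζ hxfix hprim
  have hq : 0 < q := by have := hζ.1; omega
  obtain ⟨r, -, hr⟩ := hK i a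
  rw [← hr, iter_single hζ hxfix] at huv
  set s := q ^ k * (q ^ K * i + r) with hs
  have hsi : i ≤ s := by
    have h1 : 1 ≤ q ^ k := Nat.one_le_pow _ _ hq
    have h2 : 1 ≤ q ^ K := Nat.one_le_pow _ _ hq
    nlinarith [Nat.le_mul_of_pos_left i h2, Nat.le_mul_of_pos_left (q ^ K * i + r) h1]
  have hlen : u.length + T + v.length = q ^ k := by
    have := congrArg List.length huv
    simpa [wd_length, add_assoc] using this
  have key : ∀ e, e < T → y e = x (s + (u.length + e)) := by
    intro e he
    have h3 := congrArg (fun l => l[u.length + e]?) huv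
    have h4 : u.length + e < q ^ k := by omega
    simpa [wd, h4, List.getElem?_append, he] using h3
  apply ht
  rw [key _ (by omega), key _ (by omega), ← h (s + (u.length + t)) (by omega)]
  congr 1
  ring

/-- words of length `n` as functions -/
def fw (x : ℕ → Bool) (n s : ℕ) : Fin n → Bool := fun t => x (s + t)

lemma fw_eq {x : ℕ → Bool} {n s s' : ℕ} : fw x n s = fw x n s' ↔ ∀ t < n, x (s + t) = x (s' + t) := by
  constructor
  · intro h t ht
    exact congrFun h ⟨t, ht⟩
  · intro h
    funext t
    exact h t t.2

lemma unif_rec {ζ : Bool → List Bool} {q : ℕ} {x : ℕ → Bool} (hζ : IsConstLenSubst ζ q)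
    (hxfix : substSeq ζ q x = x) (hprim : IsPrimitive ζ) (n : ℕ) :
    ∃ R, ∀ p i, ∃ h ≤ R, ∀ t < n, x (i + h + t) = x (p + t) := by
  -- every word occurs early
  have h1 : ∃ M, ∀ p, ∃ s ≤ M, ∀ t < n, x (s + t) = x (p + t) := by
    have hsec : ∀ w : Set.range (fw x n), ∃ s, fw x n s = w := fun w => w.2
    choose g hg using hsec
    obtain ⟨M, hM⟩ := (Set.finite_range g).bddAbove
    refine ⟨M, fun p => ⟨g ⟨fw x n p, p, rfl⟩, hM ⟨_, rfl⟩, ?_⟩⟩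
    exact fw_eq.1 (hg ⟨fw x n p, p, rfl⟩)
  obtain ⟨M, hM⟩ := h1
  obtain ⟨k, hk⟩ := prim_blocks hζ hxfix hprim
  have hK : M + n < q ^ (M + n) := Nat.lt_pow_self (by have := hζ.1; omega)
  set K := M + n with hKdef
  set Q := q ^ K with hQ
  refine ⟨Q * (q ^ k * 2) + Q * 1 + M, fun p i => ?_⟩
  have hq : 0 < q := by have := hζ.1; omega
  have hqk : 0 < q ^ k := Nat.pow_pos hq
  have hQ0 : 0 < Q := Nat.pow_pos hq
  obtain ⟨s, hs, hst⟩ := hM p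
  obtain ⟨r, hr, hxr⟩ := hk ((i / Q + 1) / q ^ k + 1) (x 0)
  set m := q ^ k * ((i / Q + 1) / q ^ k + 1) + r with hm
  have e1 := Nat.div_add_mod (i / Q + 1) (q ^ k)
  have e2 := Nat.mod_lt (i / Q + 1) hqk
  have e3 := Nat.div_add_mod i Q
  have e4 := Nat.mod_lt i hQ0
  have hm' : m = q ^ k * ((i / Q + 1) / q ^ k) + q ^ k + r := by rw [hm]; ring
  have m1 : i / Q + 1 ≤ m := by linarith
  have m2 : m ≤ i / Q + 1 + q ^ k * 2 := by
    have := Nat.zero_le ((i / Q + 1) % q ^ k)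
    linarith
  have m3 : Q * (i / Q + 1) ≤ Q * m := Nat.mul_le_mul_left _ m1
  have m4 : Q * m ≤ Q * (i / Q + 1 + q ^ k * 2) := Nat.mul_le_mul_left _ m2
  rw [mul_add Q (i / Q) 1] at m3
  rw [mul_add Q (i / Q + 1), mul_add Q (i / Q) 1] at m4
  clear_value m
  refine ⟨Q * m + s - i, by omega, fun t ht => ?_⟩
  have : i + (Q * m + s - i) + t = Q * m + (s + t) := by omega
  rw [this, pow_apply hζ hxfix K m 0 (s + t) (by omega) hxr, ← hst t ht]
  simp

lemma complexity_lb {x : ℕ → Bool}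
    (hnp : ∀ i p, 1 ≤ p → (∀ m, i ≤ m → x (m + p) = x m) → False) (n : ℕ) :
    n + 1 ≤ (Set.range (fw x n)).ncard := by
  induction n with
  | zero =>
    have : (Set.range (fw x 0)).Nonempty := ⟨_, 0, rfl⟩
    have := (Set.ncard_pos (Set.toFinite _)).2 this
    omega
  | succ n ih =>
    by_contra hcon
    set f : (Fin (n + 1) → Bool) → (Fin n → Bool) := fun w t => w t.castSucc with hf
    have him : f '' Set.range (fw x (n + 1)) = Set.range (fw x n) := by
      rw [← Set.range_comp]; rfl
    have hle := Set.ncard_image_le (f := f) (Set.toFinite (Set.range (fw x (n + 1))))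
    have hinj : Set.InjOn f (Set.range (fw x (n + 1))) := by
      apply Set.injOn_of_ncard_image_eq _ (Set.toFinite _)
      rw [him] at hle ⊢
      omega
    have hnext : ∀ s s', fw x n s = fw x n s' → fw x (n + 1) s = fw x (n + 1) s' :=
      fun s s' h => hinj ⟨s, rfl⟩ ⟨s', rfl⟩ h
    obtain ⟨i, j, hij, h⟩ := Finite.exists_ne_map_eq_of_infinite (fw x n)
    have main : ∀ i j, i < j → fw x n i = fw x n j → False := by
      intro i j hij h
      have hall : ∀ m, fw x n (i + m) = fw x n (j + m) := by
        intro m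
        induction m with
        | zero => exact h
        | succ m ihm =>
          have := fw_eq.1 (hnext _ _ ihm)
          rw [fw_eq]
          intro t ht
          have := this (t + 1) (by omega)
          rw [show i + (m + 1) + t = i + m + (t + 1) by ring,
            show j + (m + 1) + t = j + m + (t + 1) by ring]
          exact this
      refine hnp i (j - i) (by omega) (fun m hm => ?_)
      have := fw_eq.1 (hnext _ _ (hall (m - i))) 0 (by omega)
      rw [show m + (j - i) = j + (m - i) + 0 by omega, ← this]
      congr 1; omega
    rcases lt_or_gt_of_ne hij with h' | h'
    · exact main i j h' h
    · exact main j i h' h.symm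

lemma complexity_ub {q : ℕ} {x : ℕ → Bool} (hq : 2 ≤ q) (z : Bool → ℕ → Bool)
    (hz : ∀ m r, r < q → x (q * m + r) = z (x m) r) (m : ℕ)
    (hocc : ∀ p, ∃ p', p' % q ≠ 0 ∧ ∀ t < q * m, x (p' + t) = x (p + t)) :
    (Set.range (fw x (q * m))).ncard ≤ (q - 1) * (Set.range (fw x (m + 1))).ncard := by
  let F : ℕ × (Fin (m + 1) → Bool) → (Fin (q * m) → Bool) := fun P t =>
    z (P.2 (Fin.ofNat (m + 1) ((P.1 + t) / q))) ((P.1 + t) % q)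
  have hsub : Set.range (fw x (q * m)) ⊆ F '' (Set.Ico 1 q ×ˢ Set.range (fw x (m + 1))) := by
    rintro _ ⟨p, rfl⟩
    obtain ⟨p', hp', hpp⟩ := hocc p
    have e2 := Nat.mod_lt p' (show 0 < q by omega)
    refine ⟨(p' % q, fw x (m + 1) (p' / q)), ⟨⟨by omega, e2⟩, ⟨_, rfl⟩⟩, ?_⟩
    funext t
    have hq0 : 0 < q := by omega
    have e3 := Nat.mod_lt (p' % q + t) hq0
    have e4 : (p' % q + t) / q < m + 1 := by
      rw [Nat.div_lt_iff_lt_mul hq0]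
      have := t.2
      nlinarith
    show z (x (p' / q + ((p' % q + t) / q) % (m + 1))) ((p' % q + t) % q) = x (p + t)
    rw [Nat.mod_eq_of_lt e4, ← hz _ _ e3, ← hpp t t.2]
    congr 1
    rw [mul_add, add_assoc, Nat.div_add_mod, ← add_assoc, Nat.div_add_mod]
  calc (Set.range (fw x (q * m))).ncard
      ≤ (F '' (Set.Ico 1 q ×ˢ Set.range (fw x (m + 1)))).ncard :=
        Set.ncard_le_ncard hsub (Set.toFinite _)
    _ ≤ (Set.Ico 1 q ×ˢ Set.range (fw x (m + 1))).ncard := Set.ncard_image_le (Set.toFinite _)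
    _ = _ := by
      rw [Set.ncard_prod]
      congr 1
      rw [← Finset.coe_Ico, Set.ncard_coe_finset, Nat.card_Ico]

lemma recog {ζ : Bool → List Bool} {q : ℕ} {x : ℕ → Bool} (hζ : IsConstLenSubst ζ q)
    (hxfix : substSeq ζ q x = x) (hprim : IsPrimitive ζ) (hap : IsAperiodic ζ) :
    ∃ N, ∀ i j, (∀ h < N, x (i + h) = x (j + h)) → i % q = j % q := by
  by_contra! hcon
  have hq := hζ.1
  have hq0 : 0 < q := by omega
  have hz := fix_apply hxfix
  have hlb := complexity_lb (x := x) (fun i p => not_evper hζ hxfix hprim hap i p)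
  have hub : ∀ m, (Set.range (fw x (q * m))).ncard
      ≤ (q - 1) * (Set.range (fw x (m + 1))).ncard := by
    intro m
    apply complexity_ub hq (fun a r => (ζ a).getD r false) hz
    intro p
    by_cases hp : p % q = 0
    swap
    · exact ⟨p, hp, fun _ _ => rfl⟩
    obtain ⟨R, hR⟩ := unif_rec hζ hxfix hprim m
    obtain ⟨i, j, hij, hne⟩ := hcon (q + q * R + q * m)
    obtain ⟨h, hhR, hh⟩ := hR (p / q) (i / q + 1)
    have e1 := Nat.div_add_mod i q
    have e2 := Nat.mod_lt i hq0
    have e3 : q * h ≤ q * R := Nat.mul_le_mul_left _ hhR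
    have e4 : q * (i / q + 1 + h) = q * (i / q) + q + q * h := by ring
    obtain ⟨H, hH⟩ : ∃ H, q * (i / q + 1 + h) = i + H := ⟨q * (i / q + 1 + h) - i, by omega⟩
    refine ⟨j + H, ?_, ?_⟩
    · intro h0
      apply hne
      have : (i + H) % q = (j + H) % q := by rw [h0, ← hH]; simp
      exact Nat.ModEq.add_right_cancel' H this
    · intro t ht
      rw [add_assoc, ← hij (H + t) (by omega), ← add_assoc, ← hH]
      have e5 := Nat.div_add_mod t q
      have e6 := Nat.mod_lt t hq0
      have e7 := Nat.div_add_mod p q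
      have e8 : t / q < m := by rw [Nat.div_lt_iff_lt_mul hq0]; nlinarith
      rw [show q * (i / q + 1 + h) + t = q * (i / q + 1 + h + t / q) + t % q by
          rw [mul_add q (i / q + 1 + h)]; omega,
        show p + t = q * (p / q + t / q) + t % q by rw [mul_add]; omega,
        hz _ _ e6, hz _ _ e6, hh _ e8]
  have hit : ∀ k, ∃ n, q ^ k + 2 ≤ n ∧
      (Set.range (fw x n)).ncard ≤ (q - 1) ^ k * (Set.range (fw x 3)).ncard := by
    intro k
    induction k with
    | zero => exact ⟨3, by simp, by simp⟩
    | succ k ih =>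
      obtain ⟨n, hn, hc⟩ := ih
      refine ⟨q * (n - 1), ?_, ?_⟩
      · have : q * (q ^ k + 1) ≤ q * (n - 1) := Nat.mul_le_mul_left _ (by omega)
        rw [pow_succ]; nlinarith
      · refine (hub (n - 1)).trans ?_
        rw [show n - 1 + 1 = n by omega, pow_succ', mul_assoc]
        exact Nat.mul_le_mul_left _ hc
  set A := (Set.range (fw x 3)).ncard with hA
  have hqR : (0 : ℝ) < q := by exact_mod_cast hq0
  have hA0 : (0 : ℝ) < A := by
    have := hlb 3
    have : 0 < A := by omega
    exact_mod_cast this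
  obtain ⟨k, hk⟩ := exists_pow_lt_of_lt_one (show (0 : ℝ) < 1 / A by positivity)
    (show ((q : ℝ) - 1) / q < 1 by rw [div_lt_one hqR]; linarith)
  obtain ⟨n, hn, hc⟩ := hit k
  have h1 := hlb n
  have h2 : q ^ k ≤ (q - 1) ^ k * A := by omega
  have h3 : (q : ℝ) ^ k ≤ ((q : ℝ) - 1) ^ k * A := by
    have : ((q ^ k : ℕ) : ℝ) ≤ (((q - 1) ^ k * A : ℕ) : ℝ) := by exact_mod_cast h2
    push_cast [Nat.cast_sub (show 1 ≤ q by omega)] at this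
    exact this
  rw [div_pow, div_lt_div_iff₀ (by positivity) hA0] at hk
  linarith

lemma descent {q : ℕ} {x : ℕ → Bool} (hq : 2 ≤ q) (z : Bool → ℕ → Bool)
    (hz : ∀ m r, r < q → x (q * m + r) = z (x m) r) (hne : ∃ r < q, z false r ≠ z true r)
    (N : ℕ) (hN : ∀ i j, (∀ h < N, x (i + h) = x (j + h)) → i % q = j % q) :
    ∃ c, ∀ l, N + 2 * q ≤ l → (Kset x l).Nonempty → ∃ l', (Kset x l').Nonempty ∧ l = q * l' + c := by
  classical
  have hq0 : 0 < q := by omega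
  have hmis : ∀ m m' r, r < q → (x (q * m + r) ≠ x (q * m' + r) ↔
      (x m ≠ x m' ∧ z false r ≠ z true r)) := by
    intro m m' r hr
    rw [hz _ _ hr, hz _ _ hr]
    cases x m <;> cases x m' <;> simp [eq_comm]
  -- first mismatch
  obtain ⟨r0, hr0q, hr0, hr0min⟩ : ∃ r0 < q, z false r0 ≠ z true r0 ∧
      ∀ r < q, z false r ≠ z true r → r0 ≤ r :=
    ⟨Nat.find hne, (Nat.find_spec hne).1, (Nat.find_spec hne).2,
      fun r hr h => Nat.find_min' hne ⟨hr, h⟩⟩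
  -- last mismatch
  obtain ⟨r1, hr1q, hr1, hr1max⟩ : ∃ r1 < q, z false r1 ≠ z true r1 ∧
      ∀ r < q, z false r ≠ z true r → r ≤ r1 := by
    have hs : ((Finset.range q).filter (fun r => z false r ≠ z true r)).Nonempty := by
      obtain ⟨r, h1, h2⟩ := hne
      exact ⟨r, by simp [h1, h2]⟩
    have hm := Finset.max'_mem _ hs
    simp only [Finset.mem_filter, Finset.mem_range] at hm
    refine ⟨_, hm.1, hm.2, fun r hr h => Finset.le_max' _ _ (by simp [hr, h])⟩
  refine ⟨q + r0 - r1 - 1, ?_⟩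
  rintro l hl ⟨⟨i, j⟩, hi, hj, -, hij, hin, hbef, haft⟩
  simp only at hi hj hij hin hbef haft
  have hmod := hN i j (fun h hh => hin h (by omega))
  have hmod1 : (i - 1) % q = (j - 1) % q := by
    have : (i - 1 + 1) % q = (j - 1 + 1) % q := by
      rw [Nat.sub_add_cancel hi, Nat.sub_add_cancel hj]; exact hmod
    exact Nat.ModEq.add_right_cancel' 1 this
  have hmod2 : (i + l) % q = (j + l) % q := Nat.ModEq.add_right l hmod
  have hb := hbef (by omega) (by omega)
  have a1 := Nat.div_add_mod (i - 1) q
  have a2 := Nat.div_add_mod (j - 1) q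
  have a3 := Nat.div_add_mod (i + l) q
  have a4 := Nat.div_add_mod (j + l) q
  have b1 := Nat.mod_lt (i - 1) hq0
  have b2 := Nat.mod_lt (i + l) hq0
  rw [← hmod1] at a2
  rw [← hmod2] at a4
  generalize (i - 1) % q = r at *
  generalize (i + l) % q = r' at *
  generalize (i - 1) / q = u at *
  generalize (j - 1) / q = v at *
  generalize (i + l) / q = u' at *
  generalize (j + l) / q = v' at *
  have hin' : ∀ s, i ≤ s → s < i + l → ∀ s', s' + i = s + j → x s = x s' := by
    intro s h1 h2 s' h3
    have := hin (s - i) (by omega)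
    rwa [show i + (s - i) = s by omega, show j + (s - i) = s' by omega] at this
  rw [← a1, ← a2, hmis _ _ _ b1] at hb
  rw [← a3, ← a4, hmis _ _ _ b2] at haft
  have hu : q * (u + 1) < q * u' := by rw [mul_add]; omega
  have hu1 : u + 1 < u' := Nat.lt_of_mul_lt_mul_left hu
  have hv : q * (u' + v) = q * (v' + u) := by rw [mul_add, mul_add]; omega
  have hv1 : u' + v = v' + u := Nat.eq_of_mul_eq_mul_left hq0 hv
  have hr : r = r1 := by
    have := hr1max r b1 hb.2
    by_contra hc
    have := (hmis u v r1 hr1q).2 ⟨hb.1, hr1⟩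
    exact this (hin' _ (by omega) (by omega) _ (by omega))
  have hr' : r' = r0 := by
    have := hr0min r' b2 haft.2
    by_contra hc
    have := (hmis u' v' r0 hr0q).2 ⟨haft.1, hr0⟩
    exact this (hin' _ (by omega) (by omega) _ (by omega))
  refine ⟨u' - u - 1, ⟨(u + 1, v + 1), by simp, by simp, by omega, ?_, ?_, ?_, ?_⟩, ?_⟩
  · intro h
    simp only at h
    have : u = v := by omega
    subst this
    omega
  · intro h hh
    simp only
    by_contra hc
    have := (hmis (u + 1 + h) (v + 1 + h) r0 hr0q).2 ⟨hc, hr0⟩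
    have h5 : q * (u + 1 + h + 1) ≤ q * u' := Nat.mul_le_mul_left _ (by omega)
    have h6 : q * (u + 1 + h) = q * u + q + q * h := by ring
    have h7 : q * (v + 1 + h) = q * v + q + q * h := by ring
    rw [mul_add] at h5
    exact this (hin' _ (by omega) (by omega) _ (by omega))
  · intro _ _
    simpa using hb.1
  · simp only
    rw [show u + 1 + (u' - u - 1) = u' by omega, show v + 1 + (u' - u - 1) = v' by omega]
    exact haft.1
  · obtain ⟨d, hd⟩ : ∃ d, u' = u + 1 + d := ⟨u' - u - 1, by omega⟩
    have : u' - u - 1 = d := by omega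
    rw [this]
    have : q * u' = q * u + q + q * d := by rw [hd]; ring
    omega

lemma summable_of_descent (L : Set ℕ) (hL : ∀ l ∈ L, 1 ≤ l) (q c N : ℕ) (hq : 2 ≤ q)
    (h : ∀ l, N ≤ l → l ∈ L → ∃ l' ∈ L, l = q * l' + c) :
    Summable (Set.indicator L (fun l : ℕ => 1 / (l : ℝ))) := by
  classical
  set f := Set.indicator L (fun l : ℕ => 1 / (l : ℝ)) with hf
  have hf0 : ∀ l, 0 ≤ f l := fun l => Set.indicator_nonneg (fun _ _ => by positivity) _
  apply summable_of_sum_range_le (c := 2 * ∑ l ∈ Finset.range N, f l) hf0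
  intro M
  have hS : ∀ M, ∑ l ∈ Finset.range M, f l = ∑ l ∈ (Finset.range M).filter (· ∈ L), 1 / (l : ℝ) := by
    intro M
    rw [Finset.sum_filter]
    rfl
  have hsub : (Finset.range M).filter (· ∈ L) ⊆ (Finset.range N).filter (· ∈ L) ∪
      ((Finset.range M).filter (· ∈ L)).image (fun l => q * l + c) := by
    intro l hl
    simp only [Finset.mem_filter, Finset.mem_range, Finset.mem_union, Finset.mem_image] at hl ⊢
    by_cases hN : l < N
    · exact Or.inl ⟨hN, hl.2⟩
    · obtain ⟨l', h1, h2⟩ := h l (by omega) hl.2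
      refine Or.inr ⟨l', ⟨?_, h1⟩, h2.symm⟩
      nlinarith [Nat.le_mul_of_pos_left l' (show 0 < q by omega)]
  have h1 : ∑ l ∈ Finset.range M, f l ≤ ∑ l ∈ Finset.range N, f l +
      (1 / 2) * ∑ l ∈ Finset.range M, f l := by
    rw [hS M, hS N]
    refine (Finset.sum_le_sum_of_subset_of_nonneg hsub (fun _ _ _ => by positivity)).trans ?_
    have hu : ∀ s t : Finset ℕ, ∑ l ∈ s ∪ t, 1 / (l : ℝ) ≤ ∑ l ∈ s, 1 / (l : ℝ) + ∑ l ∈ t, 1 / (l : ℝ) := by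
      intro s t
      rw [← Finset.sum_union_inter]
      have : 0 ≤ ∑ l ∈ s ∩ t, 1 / (l : ℝ) := Finset.sum_nonneg (fun _ _ => by positivity)
      linarith
    refine (hu _ _).trans ?_
    gcongr
    rw [Finset.sum_image, Finset.mul_sum]
    · apply Finset.sum_le_sum
      intro l hl
      have hl1 : 1 ≤ l := hL l (Finset.mem_filter.1 hl).2
      have hl2 : (1 : ℝ) ≤ l := by exact_mod_cast hl1
      rw [one_div_mul_one_div]
      refine one_div_le_one_div_of_le (by positivity) ?_
      push_cast
      have : (2 : ℝ) ≤ q := by exact_mod_cast hq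
      have : (0 : ℝ) ≤ c := by positivity
      nlinarith
    · intro a _ b _ hab
      simp only at hab
      exact Nat.eq_of_mul_eq_mul_left (show 0 < q by omega) (by omega)
  linarith

end RQA

open RQA

/-- the series Σ_{ℓ ∈ L} 1/ℓ converges, where
L = {ℓ : K_ℓ ≠ ∅} is the set of lengths of inner lines in RP(x,∞,ε₀). -/
theorem summable_inv_line_lengths
    (ζ : Bool → List Bool) (q : ℕ) (hζ : IsConstLenSubst ζ q)
    (hprim : IsPrimitive ζ) (hap : IsAperiodic ζ)
    (hζ0 : (ζ false).head? = some false)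
    (x : ℕ → Bool) (hx0 : x 0 = false) (hxfix : substSeq ζ q x = x) :
    Summable (Set.indicator {ℓ : ℕ | (Kset x ℓ).Nonempty} (fun ℓ : ℕ => 1 / (ℓ : ℝ))) := by

  obtain ⟨N, hN⟩ := recog hζ hxfix hprim hap
  have hne : ∃ r < q, (ζ false).getD r false ≠ (ζ true).getD r false := by
    by_contra! hcon
    refine not_evper hζ hxfix hprim hap 0 q (by have := hζ.1; omega) (fun m _ => ?_)
    have hq0 : 0 < q := by have := hζ.1; omega
    have e1 := Nat.div_add_mod m q
    have e2 := Nat.mod_lt m hq0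
    have hh := hcon _ e2
    have h1 := fix_apply hxfix (m / q) _ e2
    have h2 := fix_apply hxfix (m / q + 1) _ e2
    rw [e1] at h1
    rw [show q * (m / q + 1) + m % q = m + q by rw [mul_add]; omega] at h2
    rw [h1, h2]
    cases x (m / q + 1) <;> cases x (m / q) <;> simp only [hh]
  obtain ⟨c, hc⟩ := descent hζ.1 (fun a r => (ζ a).getD r false) (fix_apply hxfix) hne N hN
  refine summable_of_descent _ ?_ q c (N + 2 * q) hζ.1 hc
  rintro l ⟨p, -, -, h, -⟩
  exact h
end

section
/- Let ζ be a primitive aperiodic binary substitution of constant length q ≥ 2 with ζ(0) starting with 0, x = ζ^∞(0), and δ_l(n) = #(K_l ∩ [1,n)²)/(n² − n). Then for every integer ℓ ≥ 1 the density dens(K_l) exists for each l ≥ ℓ and lim_{n→∞} Σ_{l≥ℓ} l·δ_l(n) = Σ_{l≥ℓ} l·dens(K_l), the series on the right being convergent. -/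
open Filter Topology MeasureTheory

open RQA

namespace RQAproof

lemma zeta_block (ζ : Bool → List Bool) (q : ℕ) (hζ : IsConstLenSubst ζ q)
    (x : ℕ → Bool) (hxfix : substSeq ζ q x = x) (s : ℕ) :
    ζ (x s) = (List.range' (s * q) q).map x := by
  obtain ⟨hq, hl⟩ := hζ
  apply List.ext_getElem
  · simp [hl]
  · intro r h1 h2
    have hr : r < q := by simpa [hl] using h1
    simp only [List.getElem_map, List.getElem_range', one_mul]
    have h := congrFun hxfix (s * q + r)
    rw [← h]
    unfold substSeq
    have e1 : (s * q + r) / q = s := by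
      rw [mul_comm, Nat.mul_add_div (by omega), Nat.div_eq_of_lt hr]; simp
    have e2 : (s * q + r) % q = r := by
      rw [mul_comm, Nat.mul_add_mod, Nat.mod_eq_of_lt hr]
    rw [e1, e2, List.getD_eq_getElem _ _ h1]

lemma subst_range (ζ : Bool → List Bool) (q : ℕ) (hζ : IsConstLenSubst ζ q)
    (x : ℕ → Bool) (hxfix : substSeq ζ q x = x) (n : ℕ) : ∀ s : ℕ,
    substWord ζ ((List.range' s n).map x) = (List.range' (s * q) (n * q)).map x := by
  induction n with
  | zero => intro s; simp [substWord]
  | succ n ih =>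
    intro s
    have h := ih (s + 1)
    have e : substWord ζ ((List.range' s (n+1)).map x)
        = ζ (x s) ++ substWord ζ ((List.range' (s+1) n).map x) := by
      simp [substWord, List.range'_succ]
    rw [e, h, zeta_block ζ q hζ x hxfix, ← List.map_append]
    congr 1
    have := @List.range'_append (s * q) q (n * q) 1
    rw [show (n + 1) * q = q + n * q by ring, ← this]
    congr 2
    ring

lemma subst_iter (ζ : Bool → List Bool) (q : ℕ) (hζ : IsConstLenSubst ζ q)
    (x : ℕ → Bool) (hxfix : substSeq ζ q x = x) (k : ℕ) : ∀ s : ℕ,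
    (substWord ζ)^[k] [x s] = (List.range' (s * q ^ k) (q ^ k)).map x := by
  induction k with
  | zero => intro s; simp
  | succ k ih =>
    intro s
    rw [Function.iterate_succ_apply', ih, subst_range ζ q hζ x hxfix]
    congr 2
    ring

lemma block_eq (ζ : Bool → List Bool) (q : ℕ) (hζ : IsConstLenSubst ζ q)
    (x : ℕ → Bool) (hxfix : substSeq ζ q x = x) (k s t : ℕ) (h : x s = x t) (r : ℕ)
    (hr : r < q ^ k) : x (s * q ^ k + r) = x (t * q ^ k + r) := by
  have h1 := subst_iter ζ q hζ x hxfix k s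
  have h2 := subst_iter ζ q hζ x hxfix k t
  rw [h, h2] at h1
  have := congrArg (fun L => L[r]?) h1
  simp [hr] at this
  exact this.symm

lemma prim_block (ζ : Bool → List Bool) (q : ℕ) (hζ : IsConstLenSubst ζ q)
    (x : ℕ → Bool) (hxfix : substSeq ζ q x = x) (hprim : IsPrimitive ζ) :
    ∃ K : ℕ, ∀ (s : ℕ) (b : Bool), ∃ r < q ^ K, x (s * q ^ K + r) = b := by
  obtain ⟨K, -, hK⟩ := hprim
  refine ⟨K, fun s b => ?_⟩
  have := hK (x s) b
  rw [subst_iter ζ q hζ x hxfix] at this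
  simp only [List.mem_map, List.mem_range'] at this
  obtain ⟨a, ⟨r, hr, rfl⟩, hb⟩ := this
  exact ⟨r, hr, by simpa using hb⟩

lemma not_periodic (ζ : Bool → List Bool) (q : ℕ) (hζ : IsConstLenSubst ζ q)
    (x : ℕ → Bool) (hxfix : substSeq ζ q x = x) (hprim : IsPrimitive ζ)
    (hap : IsAperiodic ζ) (p : ℕ) (hp : 1 ≤ p) : ∃ t, x (t + p) ≠ x t := by
  by_contra! hper
  obtain ⟨y, hy, hyp⟩ := hap
  obtain ⟨i, hi⟩ := hyp p hp
  obtain ⟨a, k, -, hk⟩ := hy (i + p + 1)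
  obtain ⟨K, hK⟩ := prim_block ζ q hζ x hxfix hprim
  obtain ⟨r, -, hr⟩ := hK 0 a
  rw [← hr, subst_iter ζ q hζ x hxfix] at hk
  obtain ⟨u, v, huv⟩ := hk
  have key : ∀ j, j < i + p + 1 → y j = x ((0 * q ^ K + r) * q ^ k + u.length + j) := by
    intro j hj
    have h := congrArg (fun L => L[u.length + j]?) huv
    have hlen := congrArg List.length huv
    simp at hlen
    rw [List.append_assoc, List.getElem?_append_right (by omega),
      List.getElem?_append_left (by simp; omega)] at h
    have hlt : u.length + j < q ^ k := by omega
    simp [hj, hlt, -List.ofFn_succ] at h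
    rw [h]; congr 1; ring
  apply hi
  rw [key (i+p) (by omega), key i (by omega), ← hper (_ + i), ← add_assoc]

lemma pair_rec (ζ : Bool → List Bool) (q : ℕ) (hζ : IsConstLenSubst ζ q)
    (x : ℕ → Bool) (hx0 : x 0 = false) (hxfix : substSeq ζ q x = x) (hprim : IsPrimitive ζ) :
    ∃ R : ℕ, ∀ t s : ℕ, ∃ s', s ≤ s' ∧ s' < s + R ∧ x s' = x t ∧ x (s' + 1) = x (t + 1) := by
  obtain ⟨K, hK⟩ := prim_block ζ q hζ x hxfix hprim
  have hq := hζ.1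
  have one : ∀ a b : Bool, ∃ R : ℕ, ∀ t s : ℕ, x t = a → x (t+1) = b →
      ∃ s', s ≤ s' ∧ s' < s + R ∧ x s' = a ∧ x (s' + 1) = b := by
    intro a b
    by_cases hex : ∃ t, x t = a ∧ x (t+1) = b
    · obtain ⟨t, ha, hb⟩ := hex
      set m := t + 2
      have hm : t + 1 < q ^ m := by
        have := Nat.lt_pow_self (n := m) (a := q) (by omega)
        omega
      refine ⟨q ^ m * q ^ K * 2, fun _ s _ _ => ?_⟩
      set B := s / (q ^ m * q ^ K) + 1
      obtain ⟨r, hr, hr0⟩ := hK B false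
      have hpos : 0 < q ^ m * q ^ K := by positivity
      have hd := Nat.div_add_mod s (q ^ m * q ^ K)
      have hmod := Nat.mod_lt s hpos
      have hB : (B * q ^ K) * q ^ m = q ^ m * q ^ K * (s / (q ^ m * q ^ K)) + q ^ m * q ^ K := by
        simp only [B]; ring
      have hr2 : (r + 1) * q ^ m ≤ q ^ m * q ^ K := by
        rw [mul_comm (q ^ m)]; exact Nat.mul_le_mul_right _ hr
      have e0 := block_eq ζ q hζ x hxfix m (B * q ^ K + r) 0 (by rw [hr0, hx0]) t (by omega)
      have e1 := block_eq ζ q hζ x hxfix m (B * q ^ K + r) 0 (by rw [hr0, hx0]) (t+1) (by omega)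
      simp only [zero_mul, zero_add] at e0 e1
      refine ⟨(B * q ^ K + r) * q ^ m + t, ?_, ?_, by rw [e0, ha], by rw [add_assoc, e1, hb]⟩
      · rw [add_mul, hB]; omega
      · rw [add_mul, hB]; rw [add_mul] at hr2; omega
    · exact ⟨0, fun t s h1 h2 => absurd ⟨t, h1, h2⟩ hex⟩
  choose R hR using one
  refine ⟨∑ a, ∑ b, R a b, fun t s => ?_⟩
  obtain ⟨s', h1, h2, h3, h4⟩ := hR _ _ t s rfl rfl
  refine ⟨s', h1, lt_of_lt_of_le h2 ?_, h3, h4⟩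
  have a1 := Finset.single_le_sum (f := fun b => R (x t) b) (fun i _ => Nat.zero_le _)
    (Finset.mem_univ (x (t+1)))
  have a2 := Finset.single_le_sum (f := fun a => ∑ b, R a b) (fun i _ => Nat.zero_le _)
    (Finset.mem_univ (x t))
  exact Nat.add_le_add_left (a1.trans a2) s

lemma gap (ζ : Bool → List Bool) (q : ℕ) (hζ : IsConstLenSubst ζ q)
    (x : ℕ → Bool) (hx0 : x 0 = false) (hxfix : substSeq ζ q x = x) (hprim : IsPrimitive ζ)
    (hap : IsAperiodic ζ) :
    ∃ C : ℕ, 1 ≤ C ∧ ∀ i p l : ℕ, 1 ≤ p → (∀ h, h < l → x (i + h) = x (i + p + h)) →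
      l ≤ C * p := by
  obtain ⟨R, hR⟩ := pair_rec ζ q hζ x hx0 hxfix hprim
  have hq := hζ.1
  refine ⟨(R + 3) * q, by nlinarith, fun i p l hp h => ?_⟩
  by_contra! hl
  obtain ⟨t, ht⟩ := not_periodic ζ q hζ x hxfix hprim hap p hp
  apply ht
  set k := Nat.log q p + 1 with hk
  have hpk : p < q ^ k := Nat.lt_pow_succ_log_self (by omega) p
  have hkp : q ^ k ≤ q * p := by
    rw [hk, pow_succ, mul_comm]
    exact Nat.mul_le_mul_left _ (Nat.pow_log_le_self q (by omega))
  obtain ⟨s', h1, h2, h3, h4⟩ := hR (t / q ^ k) (i / q ^ k + 1)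
  set Q := q ^ k with hQ
  have hQ0 : 0 < Q := by omega
  have hd := Nat.div_add_mod i Q
  have hmod := Nat.mod_lt i hQ0
  have hdt := Nat.div_add_mod t Q
  have hmodt := Nat.mod_lt t hQ0
  have b1 : i ≤ s' * Q := by nlinarith
  have b2 : (s' + 2) * Q ≤ i + l := by
    have : (s' + 2) * Q ≤ (i / Q + (R + 3)) * Q := Nat.mul_le_mul_right _ (by omega)
    have e : (R + 3) * Q ≤ (R + 3) * q * p := by
      rw [mul_assoc]; exact Nat.mul_le_mul_left _ hkp
    rw [add_mul (i / Q), mul_comm (i / Q)] at this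
    omega
  have e0 := block_eq ζ q hζ x hxfix k s' (t / Q) h3 (t % Q) hmodt
  have et : x t = x (s' * Q + t % Q) := by
    rw [e0]; congr 1; rw [mul_comm]; exact hdt.symm
  have etp : x (t + p) = x (s' * Q + t % Q + p) := by
    by_cases hc : t % Q + p < Q
    · have e1 := block_eq ζ q hζ x hxfix k s' (t / Q) h3 (t % Q + p) hc
      rw [add_assoc, e1]; congr 1
      rw [← hQ, mul_comm]; omega
    · have e1 := block_eq ζ q hζ x hxfix k (s'+1) (t / Q + 1) h4 (t % Q + p - Q) (by omega)
      rw [← hQ, add_mul, add_mul] at e1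
      rw [show s' * Q + t % Q + p = s' * Q + 1 * Q + (t % Q + p - Q) by omega, e1]; congr 1
      rw [mul_comm]; omega
  rw [etp, et]
  have := h (s' * Q + t % Q - i) (by rw [add_mul] at b2; omega)
  rw [show i + (s' * Q + t % Q - i) = s' * Q + t % Q by omega,
    show i + p + (s' * Q + t % Q - i) = s' * Q + t % Q + p by omega] at this
  exact this.symm

/-- block average -/
noncomputable def bavg (q : ℕ) (f : ℕ → ℝ) (k s : ℕ) : ℝ :=
  (∑ r ∈ Finset.range (q ^ k), f (s * q ^ k + r)) / (q : ℝ) ^ k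

lemma sum_blocks (f : ℕ → ℝ) (Q N : ℕ) : ∀ s : ℕ,
    ∑ i ∈ Finset.range (N * Q), f (s * Q + i) =
      ∑ a ∈ Finset.range N, ∑ r ∈ Finset.range Q, f ((s + a) * Q + r) := by
  intro s
  induction N with
  | zero => simp
  | succ N ih =>
    rw [Finset.sum_range_succ, ← ih, add_mul, one_mul, Finset.sum_range_add]
    congr 1
    apply Finset.sum_congr rfl
    intro r _
    congr 1; ring

lemma bavg_add (q : ℕ) (hq : 2 ≤ q) (f : ℕ → ℝ) (k K s : ℕ) :
    bavg q f (k + K) s = (∑ a ∈ Finset.range (q ^ K), bavg q f k (s * q ^ K + a)) / (q:ℝ) ^ K := by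
  unfold bavg
  rw [← Finset.sum_div, div_div, ← pow_add, ← sum_blocks f (q ^ k) (q ^ K) (s * q ^ K)]
  congr 1
  rw [show q ^ K * q ^ k = q ^ (k + K) by ring, show s * q ^ K * q ^ k = s * q ^ (k + K) by ring]

lemma bavg_letter (ζ : Bool → List Bool) (q : ℕ) (hζ : IsConstLenSubst ζ q)
    (x : ℕ → Bool) (hxfix : substSeq ζ q x = x) (f : ℕ → ℝ) (hf0 : ∀ i, 0 ≤ f i)
    (hf1 : ∀ i, f i ≤ 1) (m : ℕ) (hm : ∀ i j, (∀ h < m, x (i + h) = x (j + h)) → f i = f j)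
    (k s t : ℕ) (h : x s = x t) : bavg q f k s - bavg q f k t ≤ m / (q:ℝ) ^ k := by
  have hq := hζ.1
  unfold bavg
  rw [← sub_div]
  gcongr
  rw [← Finset.sum_sub_distrib]
  have h1 : ∀ r ∈ Finset.range (q ^ k), f (s * q ^ k + r) - f (t * q ^ k + r) ≤
      if q ^ k < r + m + 1 then (1:ℝ) else 0 := by
    intro r hr
    split_ifs with hc
    · linarith [hf0 (t * q ^ k + r), hf1 (s * q ^ k + r)]
    · rw [hm _ (t * q ^ k + r)]
      · simp
      · intro h' hh'
        rw [add_assoc, add_assoc]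
        exact block_eq ζ q hζ x hxfix k s t h _ (by omega)
  refine (Finset.sum_le_sum h1).trans ?_
  rw [← Finset.sum_filter, Finset.sum_const, nsmul_eq_mul, mul_one]
  have : (Finset.filter (fun r => q ^ k < r + m + 1) (Finset.range (q ^ k))).card ≤ m := by
    refine (Finset.card_le_card (t := Finset.Ico (q ^ k - m) (q ^ k)) ?_).trans ?_
    · intro r; simp; omega
    · simp; omega
  exact_mod_cast this

lemma osc_step (q : ℕ) (hq : 2 ≤ q) (f : ℕ → ℝ) (k K : ℕ) (d e : ℝ) 
    (hd : ∀ s t, bavg q f k s - bavg q f k t ≤ d)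
    (he : ∀ s t, ∃ a < q ^ K, ∃ b < q ^ K,
      bavg q f k (s * q ^ K + a) - bavg q f k (t * q ^ K + b) ≤ e) (s t : ℕ) :
    bavg q f (k + K) s - bavg q f (k + K) t ≤
      (1 - 1 / ((q:ℝ) ^ K) ^ 2) * d + 1 / ((q:ℝ) ^ K) ^ 2 * e := by
  obtain ⟨a, ha, b, hb, hab⟩ := he s t
  rw [bavg_add q hq, bavg_add q hq]
  set Q : ℝ := (q:ℝ) ^ K with hQ
  have hQ0 : 0 < Q := by positivity
  set F := bavg q f k
  have key : Q * (∑ a ∈ Finset.range (q ^ K), F (s * q ^ K + a)) -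
      Q * (∑ b ∈ Finset.range (q ^ K), F (t * q ^ K + b)) =
      ∑ p ∈ Finset.range (q ^ K) ×ˢ Finset.range (q ^ K), (F (s * q ^ K + p.1) - F (t * q ^ K + p.2)) := by
    rw [Finset.sum_product]
    simp only [Finset.sum_sub_distrib, Finset.sum_const, Finset.card_range, nsmul_eq_mul]
    rw [← Finset.mul_sum]
    push_cast
    rfl
  have hmem : (a, b) ∈ Finset.range (q ^ K) ×ˢ Finset.range (q ^ K) := by simp [ha, hb]
  have bound : ∑ p ∈ Finset.range (q ^ K) ×ˢ Finset.range (q ^ K),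
      (F (s * q ^ K + p.1) - F (t * q ^ K + p.2)) ≤ e + (Q ^ 2 - 1) * d := by
    rw [← Finset.add_sum_erase _ _ hmem]
    refine add_le_add hab ?_
    refine (Finset.sum_le_card_nsmul _ _ d (fun p _ => hd _ _)).trans ?_
    rw [Finset.card_erase_of_mem hmem, Finset.card_product, Finset.card_range, nsmul_eq_mul,
      Nat.cast_sub (Nat.mul_pos (by positivity) (by positivity))]
    push_cast
    rw [← hQ, ← sq]
  rw [← key] at bound
  rw [← sub_div, div_le_iff₀ hQ0]
  have : (1 - 1 / Q ^ 2) * d + 1 / Q ^ 2 * e = (e + (Q ^ 2 - 1) * d) / Q ^ 2 := by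
    field_simp; ring
  rw [this, div_mul_eq_mul_div, le_div_iff₀ (by positivity)]
  nlinarith

lemma freq (ζ : Bool → List Bool) (q : ℕ) (hζ : IsConstLenSubst ζ q)
    (x : ℕ → Bool) (hxfix : substSeq ζ q x = x) (hprim : IsPrimitive ζ)
    (f : ℕ → ℝ) (hf0 : ∀ i, 0 ≤ f i)
    (hf1 : ∀ i, f i ≤ 1) (m : ℕ) (hm : ∀ i j, (∀ h < m, x (i + h) = x (j + h)) → f i = f j) :
    ∃ c : ℝ, Tendsto (fun n : ℕ => (∑ i ∈ Finset.range n, f i) / (n:ℝ)) atTop (𝓝 c) := by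
  have hq := hζ.1
  have hq1 : (1:ℝ) < q := by exact_mod_cast (by omega : 1 < q)
  obtain ⟨K, hK⟩ := prim_block ζ q hζ x hxfix hprim
  have osc : ∀ ε > 0, ∃ k, ∀ s t, bavg q f k s - bavg q f k t ≤ ε := by
    intro ε hε
    obtain ⟨k0, hk0⟩ : ∃ k0 : ℕ, (m:ℝ) / (ε / 2) < (q:ℝ) ^ k0 := pow_unbounded_of_one_lt _ hq1
    set θ : ℝ := 1 / ((q:ℝ) ^ K) ^ 2 with hθ
    have hθ0 : 0 < θ := by positivity
    have hθ1 : θ ≤ 1 := by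
      rw [hθ, div_le_one (by positivity)]
      exact one_le_pow₀ (one_le_pow₀ hq1.le)
    have ind : ∀ j : ℕ, ∀ s t, bavg q f (k0 + j * K) s - bavg q f (k0 + j * K) t
        ≤ ε / 2 + (1 - θ) ^ j := by
      intro j
      induction j with
      | zero =>
        intro s t
        have b1 : bavg q f (k0 + 0 * K) s ≤ 1 := by
          unfold bavg
          rw [div_le_one (by positivity)]
          refine (Finset.sum_le_card_nsmul _ _ 1 (fun i _ => hf1 _)).trans ?_
          simp
        have b2 : 0 ≤ bavg q f (k0 + 0 * K) t := by
          unfold bavg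
          exact div_nonneg (Finset.sum_nonneg fun i _ => hf0 _) (by positivity)
        rw [pow_zero]; linarith
      | succ j ih =>
        intro s t
        have st := osc_step q hq f (k0 + j * K) K _ (ε / 2) ih (fun s t => by
          obtain ⟨a, ha, ha'⟩ := hK s false
          obtain ⟨b, hb, hb'⟩ := hK t false
          refine ⟨a, ha, b, hb, ?_⟩
          refine (bavg_letter ζ q hζ x hxfix f hf0 hf1 m hm _ _ _ (by rw [ha', hb'])).trans ?_
          rw [div_le_iff₀ (by positivity)]
          rw [div_lt_iff₀ (by positivity)] at hk0
          have : (q:ℝ) ^ k0 ≤ (q:ℝ) ^ (k0 + j * K) := pow_le_pow_right₀ hq1.le (by omega)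
          nlinarith) s t
        rw [show k0 + (j + 1) * K = k0 + j * K + K by ring]
        refine st.trans (le_of_eq ?_)
        rw [← hθ, pow_succ]; ring
    have : ∃ j : ℕ, (1 - θ) ^ j < ε / 2 :=
      exists_pow_lt_of_lt_one (by positivity) (by linarith)
    obtain ⟨j, hj⟩ := this
    exact ⟨k0 + j * K, fun s t => (ind j s t).trans (by linarith)⟩
  have app : ∀ ε > 0, ∃ c : ℝ, ∃ N : ℕ, ∀ n ≥ N, |(∑ i ∈ Finset.range n, f i) / (n:ℝ) - c| ≤ ε := by
    intro ε hε
    obtain ⟨k, hk⟩ := osc (ε / 2) (by positivity)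
    set c := bavg q f k 0
    have hc0 : 0 ≤ c := div_nonneg (Finset.sum_nonneg fun i _ => hf0 _) (by positivity)
    have hc1 : c ≤ 1 := by
      simp only [c]; unfold bavg
      rw [div_le_one (by positivity)]
      refine (Finset.sum_le_card_nsmul _ _ 1 (fun i _ => hf1 _)).trans ?_
      simp
    obtain ⟨N, hN⟩ := exists_nat_gt ((q:ℝ) ^ k / (ε / 2))
    refine ⟨c, N + 1, fun n hn => ?_⟩
    have hn0 : (0:ℝ) < n := by exact_mod_cast (by omega : 0 < n)
    have hnN : (N:ℝ) ≤ n := by exact_mod_cast (by omega : N ≤ n)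
    set Q := q ^ k with hQ
    have hQ0 : 0 < Q := by positivity
    have hd := Nat.div_add_mod n Q
    have hmod := Nat.mod_lt n hQ0
    have e : ∑ i ∈ Finset.range n, f i = ∑ a ∈ Finset.range (n / Q), (Q:ℝ) * bavg q f k a
        + ∑ r ∈ Finset.range (n % Q), f (n / Q * Q + r) := by
      conv_lhs => rw [← hd, mul_comm, Finset.sum_range_add]
      congr 1
      have := sum_blocks f Q (n / Q) 0
      simp only [zero_mul, zero_add] at this
      rw [this]
      apply Finset.sum_congr rfl
      intro a _
      unfold bavg
      rw [hQ]; push_cast; field_simp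
    have t0 : 0 ≤ ∑ r ∈ Finset.range (n % Q), f (n / Q * Q + r) := Finset.sum_nonneg fun i _ => hf0 _
    have t1 : ∑ r ∈ Finset.range (n % Q), f (n / Q * Q + r) ≤ (n % Q : ℕ) := by
      refine (Finset.sum_le_card_nsmul _ _ 1 (fun i _ => hf1 _)).trans ?_
      simp
    have u1 : ∑ a ∈ Finset.range (n / Q), (Q:ℝ) * bavg q f k a ≤ (n / Q : ℕ) * ((Q:ℝ) * (c + ε / 2)) := by
      refine (Finset.sum_le_card_nsmul _ _ ((Q:ℝ) * (c + ε / 2)) (fun i _ => ?_)).trans ?_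
      · have := hk i 0
        gcongr; linarith
      · simp
    have u2 : (n / Q : ℕ) * ((Q:ℝ) * (c - ε / 2)) ≤ ∑ a ∈ Finset.range (n / Q), (Q:ℝ) * bavg q f k a := by
      refine le_trans ?_ (Finset.card_nsmul_le_sum _ _ ((Q:ℝ) * (c - ε / 2)) (fun i _ => ?_))
      · simp
      · have := hk 0 i
        gcongr; linarith
    have hdR : (Q:ℝ) * (n / Q : ℕ) + (n % Q : ℕ) = n := by exact_mod_cast hd
    have hmR : ((n % Q : ℕ):ℝ) ≤ Q := by exact_mod_cast hmod.le
    have hm0 : (0:ℝ) ≤ (n % Q : ℕ) := by positivity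
    have hbig : (Q:ℝ) ≤ ε / 2 * n := by
      rw [div_lt_iff₀ (by positivity)] at hN
      have : (Q:ℝ) = (q:ℝ) ^ k := by rw [hQ]; push_cast; rfl
      rw [this]; nlinarith
    rw [show (∑ i ∈ Finset.range n, f i) / (n:ℝ) - c = ((∑ i ∈ Finset.range n, f i) - c * n) / n by
      field_simp, abs_div, abs_of_pos hn0, div_le_iff₀ hn0, abs_le, e]
    set A : ℝ := ((n / Q : ℕ) : ℝ)
    set B : ℝ := ((n % Q : ℕ) : ℝ)
    have hnAB : (Q:ℝ) * A = n - B := by linarith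
    have u1' : (∑ a ∈ Finset.range (n / Q), (Q:ℝ) * bavg q f k a) ≤ (n - B) * (c + ε / 2) := by
      rw [← hnAB]; linarith
    have u2' : (n - B) * (c - ε / 2) ≤ (∑ a ∈ Finset.range (n / Q), (Q:ℝ) * bavg q f k a) := by
      rw [← hnAB]; linarith
    constructor <;> nlinarith
  have : CauchySeq (fun n : ℕ => (∑ i ∈ Finset.range n, f i) / (n:ℝ)) := by
    rw [Metric.cauchySeq_iff']
    intro ε hε
    obtain ⟨c, N, hN⟩ := app (ε / 3) (by positivity)
    refine ⟨N, fun n hn => ?_⟩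
    rw [Real.dist_eq]
    have h1 := abs_le.1 (hN n hn)
    have h2 := abs_le.1 (hN N le_rfl)
    rw [abs_lt]; constructor <;> linarith
  exact cauchySeq_tendsto_of_complete this

lemma dens_exists (ζ : Bool → List Bool) (q : ℕ) (hζ : IsConstLenSubst ζ q)
    (x : ℕ → Bool) (hxfix : substSeq ζ q x = x) (hprim : IsPrimitive ζ) (l : ℕ) (hl : 1 ≤ l) :
    ∃ c, HasDens (Kset x l) c := by
  classical
  let W : ℕ → (Fin (l + 2) → Bool) := fun i t => x (i + t)
  let good : (Fin (l + 2) → Bool) → (Fin (l + 2) → Bool) → Prop := fun u v =>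
    (∀ t : Fin (l + 2), 1 ≤ (t:ℕ) → (t:ℕ) ≤ l → u t = v t) ∧ u 0 ≠ v 0 ∧
      u (Fin.last (l+1)) ≠ v (Fin.last (l+1))
  have hfreq : ∀ u, ∃ c : ℝ, Tendsto (fun n : ℕ =>
      (∑ i ∈ Finset.range n, if W i = u then (1:ℝ) else 0) / (n:ℝ)) atTop (𝓝 c) := by
    intro u
    refine freq ζ q hζ x hxfix hprim _ ?_ ?_ (l + 2) ?_
    · intro i; split_ifs <;> norm_num
    · intro i; split_ifs <;> norm_num
    · intro i j h
      have : W i = W j := by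
        funext t; exact h t t.2
      simp only [this]
  choose φ hφ using hfreq
  have hcount : ∀ n : ℕ, ((Kset x l ∩ {p : ℕ × ℕ | p.1 < n + 1 ∧ p.2 < n + 1}).ncard : ℝ) =
      ∑ u, ∑ v, if good u v then (∑ i ∈ Finset.range n, if W i = u then (1:ℝ) else 0) *
        (∑ i ∈ Finset.range n, if W i = v then (1:ℝ) else 0) else 0 := by
    intro n
    have hset : Kset x l ∩ {p : ℕ × ℕ | p.1 < n + 1 ∧ p.2 < n + 1} =
        ((((Finset.range n ×ˢ Finset.range n).filter (fun p => good (W p.1) (W p.2))).image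
          (fun p => (p.1 + 1, p.2 + 1)) : Finset (ℕ × ℕ)) : Set (ℕ × ℕ)) := by
      ext ⟨i, j⟩
      simp only [Kset, IsInfLine, Set.mem_inter_iff, Set.mem_ofPred_eq, Finset.coe_image,
        Set.mem_image, Finset.mem_coe, Finset.mem_filter, Finset.mem_product, Finset.mem_range,
        Prod.mk.injEq, Prod.exists, good, W]
      constructor
      · rintro ⟨⟨hi, hj, _, _, h1, h2, h3⟩, hin, hjn⟩
        refine ⟨i - 1, j - 1, ⟨⟨by omega, by omega⟩, ?_, ?_, ?_⟩, by omega, by omega⟩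
        · intro t ht1 ht2
          have := h1 (t - 1) (by omega)
          rwa [show i + ((t:ℕ) - 1) = i - 1 + t by omega,
            show j + ((t:ℕ) - 1) = j - 1 + t by omega] at this
        · simpa using h2 (by omega) (by omega)
        · rw [Fin.val_last, show i - 1 + (l + 1) = i + l by omega,
            show j - 1 + (l + 1) = j + l by omega]
          exact h3
      · rintro ⟨a, b, ⟨⟨ha, hb⟩, h1, h2, h3⟩, rfl, rfl⟩
        rw [Fin.val_last] at h3
        refine ⟨⟨by omega, by omega, hl, ?_, ?_, ?_, ?_⟩, by omega, by omega⟩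
        · intro hab
          apply h2; rw [show a = b by omega]
        · intro h hh
          have := h1 ⟨h + 1, by omega⟩ (by simp) (by simp; omega)
          simp only at this
          rwa [show a + 1 + h = a + (h + 1) by omega, show b + 1 + h = b + (h + 1) by omega]
        · intro _ _
          simpa using h2
        · rwa [show a + 1 + l = a + (l + 1) by omega, show b + 1 + l = b + (l + 1) by omega]
    rw [hset, Set.ncard_coe_finset, Finset.card_image_of_injective _ (by
      rintro ⟨a, b⟩ ⟨c, d⟩ h; simpa using h)]
    rw [Finset.card_filter, Finset.sum_product]
    push_cast
    have hexp : ∀ i j, (if good (W i) (W j) then (1:ℝ) else 0) =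
        ∑ u, ∑ v, if good u v then (if W i = u then (1:ℝ) else 0) * (if W j = v then (1:ℝ) else 0)
          else 0 := by
      intro i j
      rw [Finset.sum_eq_single (W i), Finset.sum_eq_single (W j)]
      · simp
      · intro v _ hv
        simp [Ne.symm hv]
      · simp
      · intro u _ hu
        simp [Ne.symm hu]
      · simp
    simp only [hexp]
    simp only [Finset.sum_mul_sum]
    have sw : ∀ i, ∑ j ∈ Finset.range n, ∑ u, ∑ v, (if good u v then (if W i = u then (1:ℝ) else 0) * (if W j = v then (1:ℝ) else 0) else 0) = ∑ u, ∑ v, ∑ j ∈ Finset.range n,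
        (if good u v then (if W i = u then (1:ℝ) else 0) * (if W j = v then (1:ℝ) else 0) else 0) := by
      intro i
      rw [Finset.sum_comm]
      exact Finset.sum_congr rfl fun u _ => Finset.sum_comm
    simp only [sw]
    rw [Finset.sum_comm]
    refine Finset.sum_congr rfl fun u _ => ?_
    rw [Finset.sum_comm]
    refine Finset.sum_congr rfl fun v _ => ?_
    split_ifs <;> simp
  refine ⟨∑ u, ∑ v, if good u v then φ u * φ v else 0, ?_⟩
  unfold HasDens
  rw [← tendsto_add_atTop_iff_nat 1]
  have hlim : Tendsto (fun n : ℕ => ((n:ℝ) / ((n:ℝ) + 1)) ^ 2 * ∑ u, ∑ v, if good u v then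
      ((∑ i ∈ Finset.range n, if W i = u then (1:ℝ) else 0) / (n:ℝ)) *
        ((∑ i ∈ Finset.range n, if W i = v then (1:ℝ) else 0) / (n:ℝ)) else 0) atTop
      (𝓝 (1 ^ 2 * ∑ u, ∑ v, if good u v then φ u * φ v else 0)) := by
    refine Tendsto.mul ((tendsto_natCast_div_add_atTop (1:ℝ)).pow 2) ?_
    refine tendsto_finsetSum _ fun u _ => tendsto_finsetSum _ fun v _ => ?_
    split_ifs
    · exact (hφ u).mul (hφ v)
    · exact tendsto_const_nhds
  rw [one_pow, one_mul] at hlim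
  refine hlim.congr' ?_
  filter_upwards [eventually_gt_atTop 0] with n hn
  have hn0 : (n:ℝ) ≠ 0 := by positivity
  unfold densCount
  rw [hcount n, Finset.mul_sum (Finset.univ : Finset (Fin (l + 2) → Bool)), Finset.sum_div (Finset.univ : Finset (Fin (l + 2) → Bool))]
  refine Finset.sum_congr rfl fun u _ => ?_
  rw [Finset.mul_sum (Finset.univ : Finset (Fin (l + 2) → Bool)), Finset.sum_div (Finset.univ : Finset (Fin (l + 2) → Bool))]
  refine Finset.sum_congr rfl fun v _ => ?_
  push_cast
  split_ifs
  · field_simp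
  · simp

lemma tannery (f : ℕ → ℕ → ℝ) (g : ℕ → ℝ) (h0 : ∀ᶠ n in atTop, ∀ k, 0 ≤ f n k)
    (hs : ∀ᶠ n in atTop, Summable (f n)) (hlim : ∀ k, Tendsto (fun n => f n k) atTop (𝓝 (g k)))
    (htail : ∀ ε > 0, ∃ N : ℕ, ∀ᶠ n in atTop, ∀ M, ∑ k ∈ Finset.range M, f n (N + k) ≤ ε) :
    Summable g ∧ Tendsto (fun n => ∑' k, f n k) atTop (𝓝 (∑' k, g k)) := by
  have hg0 : ∀ k, 0 ≤ g k := fun k => ge_of_tendsto (hlim k) (h0.mono fun n h => h k)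
  have gt : ∀ ε > 0, ∃ N : ℕ, (∀ᶠ n in atTop, ∀ M, ∑ k ∈ Finset.range M, f n (N + k) ≤ ε) ∧
      ∀ M, ∑ k ∈ Finset.range M, g (N + k) ≤ ε := by
    intro ε hε
    obtain ⟨N, hN⟩ := htail ε hε
    exact ⟨N, hN, fun M => le_of_tendsto (tendsto_finsetSum _ fun k _ => hlim (N + k))
      (hN.mono fun n h => h M)⟩
  have hsg : Summable g := by
    obtain ⟨N, -, hN⟩ := gt 1 one_pos
    rw [← summable_nat_add_iff N]
    refine summable_of_sum_range_le (c := 1) (fun n => hg0 _) fun M => ?_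
    simpa [add_comm] using hN M
  refine ⟨hsg, ?_⟩
  rw [Metric.tendsto_atTop']
  intro ε hε
  obtain ⟨N, hN1, hN2⟩ := gt (ε / 4) (by positivity)
  have hfin : Tendsto (fun n => ∑ k ∈ Finset.range N, f n k) atTop
      (𝓝 (∑ k ∈ Finset.range N, g k)) := tendsto_finsetSum _ fun k _ => hlim k
  have hfin' := (Metric.tendsto_nhds.1 hfin) (ε / 4) (by positivity)
  have := h0.and (hs.and (hN1.and hfin'))
  obtain ⟨n0, hn0⟩ := eventually_atTop.1 this
  refine ⟨n0, fun n hn => ?_⟩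
  obtain ⟨a0, as, a1, a2⟩ := hn0 n hn.le
  rw [Real.dist_eq] at a2 ⊢
  rw [← as.sum_add_tsum_nat_add N, ← hsg.sum_add_tsum_nat_add N]
  have t1 : ∑' k, f n (k + N) ≤ ε / 4 := by
    refine Real.tsum_le_of_sum_range_le (fun k => a0 _) fun M => ?_
    simpa [add_comm] using a1 M
  have t2 : ∑' k, g (k + N) ≤ ε / 4 := by
    refine Real.tsum_le_of_sum_range_le (fun k => hg0 _) fun M => ?_
    simpa [add_comm] using hN2 M
  have t3 : 0 ≤ ∑' k, f n (k + N) := tsum_nonneg fun k => a0 _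
  have t4 : 0 ≤ ∑' k, g (k + N) := tsum_nonneg fun k => hg0 _
  rw [abs_lt] at a2 ⊢
  constructor <;> linarith

def Gap (x : ℕ → Bool) (C : ℕ) : Prop :=
  ∀ i p l : ℕ, 1 ≤ p → (∀ h, h < l → x (i + h) = x (i + p + h)) → l ≤ C * p

lemma Gap.lt {x : ℕ → Bool} {C : ℕ} (hC : Gap x C) {n i j l : ℕ} (hij : i ≠ j)
    (hi : i < n) (hj : j < n)
    (h : ∀ h, h < l → x (i + h) = x (j + h)) : l ≤ C * n := by
  rcases lt_or_gt_of_ne hij with h' | h'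
  · refine (hC i (j - i) l (by omega) fun t ht => ?_).trans (Nat.mul_le_mul_left _ (by omega))
    rw [show i + (j - i) = j by omega]; exact h t ht
  · refine (hC j (i - j) l (by omega) fun t ht => ?_).trans (Nat.mul_le_mul_left _ (by omega))
    rw [show j + (i - j) = i by omega]; exact (h t ht).symm

lemma pair_count (x : ℕ → Bool) (C D N : ℕ) (hC1 : 1 ≤ C) (hD : 1 ≤ D) (hC : Gap x C) :
    (((Finset.range N ×ˢ Finset.range N).filter
      (fun p => ∀ h < C * D, x (p.1 + h) = x (p.2 + h))).card) ≤ N * (N / D + 1) := by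
  rw [Finset.card_filter, Finset.sum_product]
  refine (Finset.sum_le_card_nsmul _ _ (N / D + 1) fun a _ => ?_).trans (by simp)
  rw [← Finset.card_filter]
  have : (Finset.range (N / D + 1)).card = N / D + 1 := Finset.card_range _
  rw [← this]
  refine Finset.card_le_card_of_injOn (fun b => b / D) ?_ ?_
  · intro b hb
    simp at hb ⊢
    exact Nat.div_le_div_right hb.1.le
  · have aux : ∀ b c, b < c → (∀ h < C * D, x (b + h) = x (c + h)) → b / D ≠ c / D := by
      intro b c hbc h he
      have := hC b (c - b) (C * D) (by omega) (by
        intro t ht; rw [show b + (c - b) = c by omega]; exact h t ht)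
      have h2 : D ≤ c - b := Nat.le_of_mul_le_mul_left this (by omega)
      have : b / D + 1 ≤ c / D := by
        rw [← Nat.add_div_right _ (by omega)]
        exact Nat.div_le_div_right (by omega)
      omega
    intro b hb c hc hbc
    simp only [Finset.coe_filter, Set.mem_ofPred_eq] at hb hc hbc
    by_contra hne
    rcases lt_or_gt_of_ne hne with h' | h'
    · exact aux b c h' (fun h hh => (hb.2 h hh).symm.trans (hc.2 h hh)) hbc
    · exact aux c b h' (fun h hh => (hc.2 h hh).symm.trans (hb.2 h hh)) hbc.symm

lemma line_count (x : ℕ → Bool) (C D n : ℕ) (hC1 : 1 ≤ C) (hD : 1 ≤ D) (hC : Gap x C)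
    (S : Finset ℕ) (hS : ∀ l ∈ S, 2 * (C * D) ≤ l) :
    ∑ l ∈ S, l * (Kset x l ∩ {p : ℕ × ℕ | p.1 < n ∧ p.2 < n}).ncard ≤
      2 * (((C + 1) * n) * ((C + 1) * n / D + 1)) := by
  classical
  let Kf : ℕ → Finset (ℕ × ℕ) := fun l =>
    (Finset.range n ×ˢ Finset.range n).filter (fun p => p ∈ Kset x l)
  have hK : ∀ l, (Kset x l ∩ {p : ℕ × ℕ | p.1 < n ∧ p.2 < n}).ncard = (Kf l).card := by
    intro l
    rw [← Set.ncard_coe_finset]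
    congr 1
    ext p
    simp [Kf, and_comm]
  have hKm : ∀ l p, p ∈ Kf l ↔ (p.1 < n ∧ p.2 < n) ∧ p ∈ Kset x l := by
    intro l p; simp [Kf]
  simp only [hK]
  have hle : ∑ l ∈ S, l * (Kf l).card ≤ 2 * (S.sigma fun l => Kf l ×ˢ Finset.range ((l + 1) / 2)).card := by
    rw [Finset.card_sigma, Finset.mul_sum]
    refine Finset.sum_le_sum fun l _ => ?_
    rw [Finset.card_product, Finset.card_range, mul_comm, mul_left_comm]
    exact Nat.mul_le_mul_left _ (by omega)
  refine hle.trans (Nat.mul_le_mul_left _ ?_)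
  refine le_trans ?_ (pair_count x C D ((C + 1) * n) hC1 hD hC)
  refine Finset.card_le_card_of_injOn (fun z => (z.2.1.1 + z.2.2, z.2.1.2 + z.2.2)) ?_ ?_
  · rintro ⟨l, ⟨i, j⟩, t⟩ hz
    simp only [Finset.coe_sigma, Set.mem_sigma_iff, Finset.mem_coe, Finset.mem_product,
      hKm, Finset.mem_range] at hz
    obtain ⟨hlS, ⟨⟨hi, hj⟩, _, _, h1, hij, h2, h3, h4⟩, ht⟩ := hz
    have := hS l hlS
    have hb := hC.lt hij hi hj h2
    simp only [Finset.coe_filter, Set.mem_ofPred_eq, Finset.mem_product, Finset.mem_range]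
    have e : (C + 1) * n = C * n + n := by ring
    refine ⟨⟨by omega, by omega⟩, fun h hh => ?_⟩
    rw [add_assoc, add_assoc]
    exact h2 _ (by omega)
  · have aux : ∀ l i j t l' i' j' t', (i, j) ∈ Kset x l → (i', j') ∈ Kset x l' → t < l → t' < l' →
        i + t = i' + t' → j + t = j' + t' → t' ≤ t := by
      rintro l i j t l' i' j' t' ⟨_, _, _, _, h2, h3, h4⟩ ⟨g0, g1, _, _, g2, g3, g4⟩ ht ht' ei ej
      by_contra hlt
      simp only at *
      apply h3 (by omega) (by omega)
      have := g2 (t' - t - 1) (by omega)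
      rwa [show i' + (t' - t - 1) = i - 1 by omega, show j' + (t' - t - 1) = j - 1 by omega] at this
    have aux2 : ∀ l l' p, p ∈ Kset x l → p ∈ Kset x l' → l' ≤ l := by
      rintro l l' p ⟨_, _, _, _, h2, h3, h4⟩ ⟨g0, g1, _, _, g2, g3, g4⟩
      by_contra hlt
      exact h4 (g2 l (by omega))
    rintro ⟨l, ⟨i, j⟩, t⟩ hz ⟨l', ⟨i', j'⟩, t'⟩ hz' he
    simp only [Finset.coe_sigma, Set.mem_sigma_iff, Finset.mem_coe, Finset.mem_product,
      hKm, Finset.mem_range] at hz hz'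
    simp only [Prod.mk.injEq] at he
    obtain ⟨_, ⟨_, hk⟩, ht⟩ := hz
    obtain ⟨_, ⟨_, hk'⟩, ht'⟩ := hz'
    have hl := hk.2.2.1
    have hl' := hk'.2.2.1
    have a1 := aux _ _ _ t _ _ _ t' hk hk' (by omega) (by omega) he.1 he.2
    have a2 := aux _ _ _ t' _ _ _ t hk' hk (by omega) (by omega) he.1.symm he.2.symm
    obtain rfl : t = t' := by omega
    obtain rfl : i = i' := by omega
    obtain rfl : j = j' := by omega
    obtain rfl : l = l' := le_antisymm (aux2 _ _ _ hk' hk) (aux2 _ _ _ hk hk')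
    rfl

end RQAproof

open RQAproof

/-- lim_{n→∞} Σ_{l≥ℓ} l·δ_l(n) = Σ_{l≥ℓ} l·dens(K_l). -/
theorem tendsto_sum_deltaK
    (ζ : Bool → List Bool) (q : ℕ) (hζ : IsConstLenSubst ζ q)
    (hprim : IsPrimitive ζ) (hap : IsAperiodic ζ)
    (hζ0 : (ζ false).head? = some false)
    (x : ℕ → Bool) (hx0 : x 0 = false) (hxfix : substSeq ζ q x = x)
    (ℓ : ℕ) (hℓ : 1 ≤ ℓ) :
    ∃ dK : ℕ → ℝ,
      (∀ l : ℕ, ℓ ≤ l → HasDens (Kset x l) (dK l)) ∧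
      Summable (fun k : ℕ => ((ℓ + k : ℕ) : ℝ) * dK (ℓ + k)) ∧
      Tendsto (fun n : ℕ => ∑' k : ℕ, ((ℓ + k : ℕ) : ℝ) * deltaK x (ℓ + k) n) atTop
        (𝓝 (∑' k : ℕ, ((ℓ + k : ℕ) : ℝ) * dK (ℓ + k))) := by
  have hd : ∀ l, ∃ c, ℓ ≤ l → HasDens (Kset x l) c := by
    intro l
    by_cases h : ℓ ≤ l
    · obtain ⟨c, hc⟩ := dens_exists ζ q hζ x hxfix hprim l (by omega)
      exact ⟨c, fun _ => hc⟩
    · exact ⟨0, fun h' => absurd h' h⟩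
  choose dK hdK using hd
  refine ⟨dK, hdK, ?_⟩
  obtain ⟨C, hC1, hC⟩ := gap ζ q hζ x hx0 hxfix hprim hap
  have hC : Gap x C := hC
  have hden : ∀ n : ℕ, 2 ≤ n → (n:ℝ) ^ 2 / 2 ≤ (n:ℝ) ^ 2 - n := by
    intro n hn
    have : (2:ℝ) ≤ n := by exact_mod_cast hn
    nlinarith
  apply tannery (fun n k => ((ℓ + k : ℕ) : ℝ) * deltaK x (ℓ + k) n)
  · filter_upwards [eventually_ge_atTop 2] with n hn k
    unfold deltaK
    have := hden n hn
    have h0 : (0:ℝ) ≤ (n:ℝ) ^ 2 / 2 := by positivity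
    exact mul_nonneg (by positivity) (div_nonneg (by positivity) (by linarith))
  · refine Eventually.of_forall fun n => ?_
    refine summable_of_ne_finset_zero (s := Finset.range (C * n + 1)) fun k hk => ?_
    have hk' : C * n + 1 ≤ k := by simpa using hk
    have : Kset x (ℓ + k) ∩ {p : ℕ × ℕ | p.1 < n ∧ p.2 < n} = ∅ := by
      rw [Set.eq_empty_iff_forall_notMem]
      rintro ⟨i, j⟩ ⟨⟨_, _, _, hij, h2, _⟩, hi, hj⟩
      have := hC.lt hij hi hj h2
      omega
    simp [deltaK, this]
  · intro k
    refine Tendsto.const_mul _ ?_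
    have h1 := hdK (ℓ + k) (by omega)
    unfold HasDens at h1
    have h2 : Tendsto (fun n : ℕ => (n:ℝ) / ((n:ℝ) + (-1))) atTop (𝓝 1) :=
      tendsto_natCast_div_add_atTop (-1:ℝ)
    have h3 := h1.mul h2
    rw [mul_one] at h3
    refine h3.congr' ?_
    filter_upwards [eventually_ge_atTop 2] with n hn
    have hn2 : (2:ℝ) ≤ n := by exact_mod_cast hn
    unfold densCount deltaK
    have e1 : (n:ℝ) + (-1) ≠ 0 := by linarith
    have e2 : (n:ℝ) ≠ 0 := by linarith
    rw [show (n:ℝ) ^ 2 - n = n * (n + (-1)) by ring]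
    field_simp
  · intro ε hε
    obtain ⟨D, hD⟩ := exists_nat_gt (8 * ((C:ℝ) + 1) ^ 2 / ε)
    have hD0 : 1 ≤ D := by
      have : (0:ℝ) < D := lt_of_le_of_lt (by positivity) hD
      exact_mod_cast this
    obtain ⟨n0, hn0⟩ := exists_nat_gt (8 * ((C:ℝ) + 1) / ε)
    refine ⟨2 * (C * D), ?_⟩
    filter_upwards [eventually_ge_atTop (n0 + 2)] with n hn M
    have hn2 : (2:ℝ) ≤ n := by exact_mod_cast (by omega : 2 ≤ n)
    have hnn0 : (n0:ℝ) ≤ n := by exact_mod_cast (by omega : n0 ≤ n)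
    have hden' := hden n (by omega)
    have hpos : 0 < (n:ℝ) ^ 2 - n := by nlinarith
    have hlc := line_count x C D n hC1 hD0 hC
      ((Finset.range M).image fun k => ℓ + (2 * (C * D) + k)) (by
        intro l hl
        simp only [Finset.mem_image] at hl
        obtain ⟨k, _, rfl⟩ := hl
        omega)
    rw [Finset.sum_image (by intro a _ b _ h; simpa using h)] at hlc
    have hlc' : (∑ k ∈ Finset.range M, ((ℓ + (2 * (C * D) + k) : ℕ) : ℝ) *
        ((Kset x (ℓ + (2 * (C * D) + k)) ∩ {p : ℕ × ℕ | p.1 < n ∧ p.2 < n}).ncard : ℝ)) ≤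
        2 * ((((C:ℝ) + 1) * n) * ((((C + 1) * n / D : ℕ) : ℝ) + 1)) := by
      exact_mod_cast hlc
    have hdiv : (((C + 1) * n / D : ℕ) : ℝ) ≤ ((C:ℝ) + 1) * n / D := by
      refine Nat.cast_div_le.trans ?_
      push_cast; exact le_rfl
    unfold deltaK
    simp only [← mul_div_assoc]
    rw [← Finset.sum_div, div_le_iff₀ hpos]
    refine hlc'.trans ?_
    have hDp : (0:ℝ) < D := by exact_mod_cast hD0
    rw [div_lt_iff₀ hε] at hD hn0
    have k1 : ((C:ℝ) + 1) * n * (((C:ℝ) + 1) * n / D) ≤ ε / 8 * n ^ 2 := by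
      rw [← mul_div_assoc, div_le_iff₀ hDp]
      have : 0 ≤ (n:ℝ)^2 := by positivity
      nlinarith
    have k2 : ((C:ℝ) + 1) * n ≤ ε / 8 * n ^ 2 := by
      have : (C:ℝ) + 1 ≤ ε / 8 * n := by nlinarith
      nlinarith
    have k3 : ((C:ℝ) + 1) * n * (((C + 1) * n / D : ℕ) : ℝ) ≤
      ((C:ℝ) + 1) * n * (((C:ℝ) + 1) * n / D) := by gcongr
    nlinarith
end
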